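/- Let ε_k → 0 as k → ∞ and let φ_{ε_k} be any sequence of normalised self-similar profiles for K_{ε_k}. Then φ_{ε_k} converges to e^{−x} weakly in the sense of measures, i.e. lim_{k→∞} ∫₀^∞ (φ_{ε_k}(x) − e^{−x}) ψ(x) dx = 0 for every bounded continuous function ψ on [0,∞). Moreover x φ_{ε_k}(x) converges weakly in the sense of measures to x e^{−x}, i.e. lim_{k→∞} ∫₀^∞ x (φ_{ε_k}(x) − e^{−x}) ψ(x) dx = 0 for every bounded continuous ψ on [0,∞). -/

import Mathlib

open MeasureTheory Real Set Filter

noncomputable def weight (a b x : ℝ) : ℝ := if x ≤ 1 then x ^ a else x ^ b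

noncomputable def Xnorm (a b : ℝ) (g : ℝ → ℝ) : ℝ :=
  ∫ x in Ioi (0:ℝ), |g x| * weight a b x

def MemX (a b : ℝ) (g : ℝ → ℝ) : Prop :=
  IntegrableOn (fun x => g x * weight a b x) (Ioi 0)

noncomputable def Kern (ε : ℝ) (W : ℝ → ℝ → ℝ) (x y : ℝ) : ℝ := 2 + ε * W x y

def GoodW (α : ℝ) (W : ℝ → ℝ → ℝ) : Prop :=
  ContinuousOn (fun p : ℝ × ℝ => W p.1 p.2) (Ioi 0 ×ˢ Ioi 0) ∧
  (∀ x y : ℝ, 0 < x → 0 < y → W x y = W y x) ∧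
  (∀ l x y : ℝ, 0 < l → 0 < x → 0 < y → W (l * x) (l * y) = W x y) ∧
  (∀ x y : ℝ, 0 < x → 0 < y → 0 ≤ W x y ∧ W x y ≤ (x / y) ^ α + (y / x) ^ α)

def IsProfile (K : ℝ → ℝ → ℝ) (φ : ℝ → ℝ) : Prop :=
  LocallyIntegrableOn φ (Ioi 0) ∧
  (∀ᵐ x ∂(volume.restrict (Ioi (0:ℝ))), 0 ≤ φ x) ∧
  IntegrableOn (fun x => x * φ x) (Ioi 0) ∧
  (∀ᵐ x ∂(volume.restrict (Ioi (0:ℝ))),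
    x ^ 2 * φ x = ∫ y in Ioo 0 x, ∫ z in Ioi (x - y), y * K y z * φ y * φ z)

def IsNormalised (φ : ℝ → ℝ) : Prop := ∫ x in Ioi (0:ℝ), x * φ x = 1

/-!
Multiplying the profile equation by `q exp (-q x)` and integrating over `x` turns it into
`-q Q'' = ∬ y K(y, z) exp (-q y) (1 - exp (-q z)) φ(y) φ(z)`, where `Q` is the Bernstein transform
`Q(q) = ∫ (1 - exp (-q x)) φ(x)`. The kernel `2` contributes `2 Q Q'` and the perturbation at most
`4 ε q ^ (1 - α)`, so `G = q Q' - Q + Q²`, whose derivative is `q Q'' + 2 Q Q'`, satisfies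
`-C ε q ^ (2 - α) ≤ G ≤ 0`. Integrating this Riccati inequality from `q = 0`, where normalisation
gives `Q(q) / q → 1`, squeezes `Q` between `q / (1 + q) - C ε q ^ (2 - α)` and `q / (1 + q)`, the
Bernstein transform of `exp (-x)`. The upper bound yields total mass at most `1`, which is what
makes the error estimate uniform. Convergence of `Q`, and then of `Q'` through `G → 0`, is
convergence of the Laplace transforms of `φ` and `x φ` at every `q ≥ 0`. Their values at integers
are the moments of the images under `x ↦ exp (-x)`, so Weierstrass approximation gives weak
convergence.

A Bochner integral that diverges is `0` in Lean, so the profile equation carries information only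
where its right-hand side, the mass flux, is finite; that this holds almost everywhere has to be
proved first, by comparing the flux at `x` with the flux at a smaller size.
-/

open scoped Topology ENNReal

section Elementary

lemma rpow_le_one_add {t a : ℝ} (ht : 0 ≤ t) (ha0 : 0 ≤ a) (ha1 : a ≤ 1) : t ^ a ≤ 1 + t := by
  rcases le_total t 1 with h | h
  · exact (rpow_le_one ht h ha0).trans (by linarith)
  · exact (rpow_le_self_of_one_le h ha1).trans (by linarith)

lemma rpow_mul_exp_neg_le_one {t a : ℝ} (ht : 0 ≤ t) (ha0 : 0 ≤ a) (ha1 : a ≤ 1) :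
    t ^ a * exp (-t) ≤ 1 := by
  rw [exp_neg, ← div_eq_mul_inv, div_le_one (exp_pos t)]
  linarith [rpow_le_one_add ht ha0 ha1, add_one_le_exp t]

lemma one_sub_exp_neg_le_rpow {t a : ℝ} (ht : 0 ≤ t) (ha0 : 0 ≤ a) (ha1 : a ≤ 1) :
    1 - exp (-t) ≤ t ^ a := by
  rcases le_total t 1 with h | h
  · exact (by linarith [one_sub_le_exp_neg t] : 1 - exp (-t) ≤ t).trans
      (self_le_rpow_of_le_one ht h ha1)
  · linarith [exp_pos (-t), one_le_rpow h ha0]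

lemma one_sub_exp_neg_nonneg {t : ℝ} (ht : 0 ≤ t) : 0 ≤ 1 - exp (-t) := by
  simpa only [sub_nonneg, exp_le_one_iff, Left.neg_nonpos_iff] using ht

lemma pow_mul_exp_neg_mul_le {q x : ℝ} (hq : 0 < q) (hx : 0 ≤ x) (n : ℕ) :
    x ^ n * exp (-(q * x)) ≤ n.factorial / q ^ n := by
  have h := pow_div_factorial_le_exp (q * x) (by positivity) n
  rw [div_le_iff₀ (by positivity), mul_pow] at h
  rw [exp_neg, ← div_eq_mul_inv, div_le_div_iff₀ (exp_pos _) (by positivity)]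
  linarith

variable {a y z q : ℝ}

lemma mul_div_rpow_mul_exp_le (ha0 : 0 ≤ a) (ha1 : a ≤ 1) (hy : 0 < y) (hz : 0 < z) (hq : 0 < q) :
    y * (y / z) ^ a * (exp (-(q * y)) * (1 - exp (-(q * z)))) ≤ q ^ (1 - a) * (y * (1 + z)) := by
  have hexp : (q * y) ^ a * exp (-(q * y)) ≤ 1 :=
    rpow_mul_exp_neg_le_one (by positivity) ha0 ha1
  have hone : 1 - exp (-(q * z)) ≤ q * z := by linarith [one_sub_le_exp_neg (q * z)]
  have hscale : (y / z) ^ a * (q * z) = (q * y) ^ a * (q ^ (1 - a) * z ^ (1 - a)) := by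
    rw [← mul_rpow hq.le hz.le, show y / z = q * y / (q * z) by field_simp,
      div_rpow (by positivity) (by positivity), rpow_sub (by positivity), rpow_one]
    ring
  calc y * (y / z) ^ a * (exp (-(q * y)) * (1 - exp (-(q * z))))
      ≤ y * (y / z) ^ a * (exp (-(q * y)) * (q * z)) := by gcongr
    _ = y * ((y / z) ^ a * (q * z)) * exp (-(q * y)) := by ring
    _ = q ^ (1 - a) * (y * z ^ (1 - a)) * ((q * y) ^ a * exp (-(q * y))) := by
      rw [hscale]; ring
    _ ≤ q ^ (1 - a) * (y * (1 + z)) * 1 := by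
      gcongr
      exact rpow_le_one_add hz.le (by linarith) (by linarith)
    _ = _ := mul_one _

lemma mul_div_rpow_mul_exp_le' (ha0 : 0 ≤ a) (ha1 : a ≤ 1) (hy : 0 < y) (hz : 0 < z)
    (hq : 0 < q) :
    y * (z / y) ^ a * (exp (-(q * y)) * (1 - exp (-(q * z)))) ≤ q ^ (1 - a) * ((1 + y) * z) := by
  have hexp : exp (-(q * y)) ≤ 1 := exp_le_one_iff.2 (by nlinarith)
  have hone : 1 - exp (-(q * z)) ≤ (q * z) ^ (1 - a) :=
    one_sub_exp_neg_le_rpow (by positivity) (by linarith) (by linarith)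
  have hscale : y * (z / y) ^ a * (q * z) ^ (1 - a) = q ^ (1 - a) * (y ^ (1 - a) * z) := by
    rw [mul_rpow hq.le hz.le, div_rpow hz.le hy.le, rpow_sub hy, rpow_sub hz, rpow_one, rpow_one]
    field_simp
  calc y * (z / y) ^ a * (exp (-(q * y)) * (1 - exp (-(q * z))))
      ≤ y * (z / y) ^ a * (1 * (q * z) ^ (1 - a)) := by
        gcongr
        exact one_sub_exp_neg_nonneg (by positivity)
    _ = q ^ (1 - a) * (y ^ (1 - a) * z) := by rw [one_mul, hscale]
    _ ≤ _ := by
      gcongr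
      exact rpow_le_one_add hy.le (by linarith) (by linarith)

end Elementary

section Riccati

lemma nonpos_of_hasDerivAt_nonpos {f f' : ℝ → ℝ} (hf : ∀ q, 0 < q → HasDerivAt f (f' q) q)
    (hf' : ∀ q, 0 < q → f' q ≤ 0) (hlim : Tendsto f (𝓝[>] 0) (𝓝 0)) {q : ℝ} (hq : 0 < q) :
    f q ≤ 0 := by
  have hanti : AntitoneOn f (Ioi 0) := by
    refine antitoneOn_of_deriv_nonpos (convex_Ioi 0)
      (fun x hx => (hf x hx).continuousAt.continuousWithinAt) ?_ ?_
    · rw [interior_Ioi]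
      exact fun x hx => (hf x hx).differentiableAt.differentiableWithinAt
    · rw [interior_Ioi]
      exact fun x hx => (hf x hx).deriv.le.trans (hf' x hx)
  refine ge_of_tendsto hlim ?_
  filter_upwards [Ioo_mem_nhdsGT hq] with x hx
  exact hanti hx.1 hq hx.2.le

/-- The quantity `q Q' - Q + Q²`, with `P` standing for `Q'`. It vanishes identically when `Q` is
`q / (1 + q)`, the Bernstein transform of `exp (-x)`. -/
def riccatiDefect (Q P : ℝ → ℝ) (q : ℝ) : ℝ := q * P q - Q q + Q q ^ 2

variable {Q P R : ℝ → ℝ} {c β q : ℝ}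

lemma tendsto_rpow_nhdsGT_zero (hβ : 0 < β) : Tendsto (fun q : ℝ => q ^ β) (𝓝[>] 0) (𝓝 0) := by
  have h := (continuous_rpow_const hβ.le).tendsto (0 : ℝ)
  rw [zero_rpow hβ.ne'] at h
  exact h.mono_left nhdsWithin_le_nhds

lemma hasDerivAt_riccatiDefect (hQ : HasDerivAt Q (P q) q) (hP : HasDerivAt P (-R q) q) :
    HasDerivAt (riccatiDefect Q P) (2 * Q q * P q - q * R q) q := by
  refine ((((hasDerivAt_id' q).mul hP).sub hQ).add (hQ.pow 2)).congr_deriv ?_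
  ring

lemma tendsto_riccatiDefect (hP : ∀ q, 0 < q → |P q| ≤ 1)
    (hlim : Tendsto (fun q => Q q / q) (𝓝[>] 0) (𝓝 1)) :
    Tendsto (riccatiDefect Q P) (𝓝[>] 0) (𝓝 0) := by
  have hid : Tendsto (fun q : ℝ => q) (𝓝[>] 0) (𝓝 0) := nhdsWithin_le_nhds
  have hqP : Tendsto (fun q => q * P q) (𝓝[>] 0) (𝓝 0) := by
    refine squeeze_zero_norm' ?_ hid
    filter_upwards [self_mem_nhdsWithin] with q hq
    rw [norm_mul, norm_of_nonneg (le_of_lt hq)]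
    exact mul_le_of_le_one_right (le_of_lt hq) (hP q hq)
  have hQ : Tendsto Q (𝓝[>] 0) (𝓝 0) := by
    have h := hlim.mul hid
    rw [mul_zero] at h
    refine h.congr' ?_
    filter_upwards [self_mem_nhdsWithin] with q hq
    exact div_mul_cancel₀ _ (ne_of_gt hq)
  have h := (hqP.sub hQ).add (hQ.pow 2)
  rwa [sub_zero, zero_pow two_ne_zero, add_zero] at h

variable (hQ : ∀ q, 0 < q → HasDerivAt Q (P q) q)
include hQ

section Derivatives

variable (hP : ∀ q, 0 < q → HasDerivAt P (-R q) q) (hP1 : ∀ q, 0 < q → |P q| ≤ 1)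
  (hlim : Tendsto (fun q => Q q / q) (𝓝[>] 0) (𝓝 1))
include hP hP1 hlim

lemma riccatiDefect_nonpos (hR : ∀ q, 0 < q → 2 * Q q * P q ≤ q * R q) (hq : 0 < q) :
    riccatiDefect Q P q ≤ 0 :=
  nonpos_of_hasDerivAt_nonpos (fun q hq => hasDerivAt_riccatiDefect (hQ q hq) (hP q hq))
    (fun q hq => sub_nonpos.2 (hR q hq)) (tendsto_riccatiDefect hP1 hlim) hq

lemma neg_le_riccatiDefect (hβ : 0 < β)
    (hR : ∀ q, 0 < q → q * R q ≤ 2 * Q q * P q + c * q ^ β) (hq : 0 < q) :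
    -(c / (β + 1) * q ^ (β + 1)) ≤ riccatiDefect Q P q := by
  have hderiv : ∀ q, 0 < q →
      HasDerivAt (fun q => -(c / (β + 1) * q ^ (β + 1)) - riccatiDefect Q P q)
        (-(c / (β + 1) * ((β + 1) * q ^ (β + 1 - 1))) - (2 * Q q * P q - q * R q)) q :=
    fun q hq => (((hasDerivAt_rpow_const (Or.inl hq.ne')).const_mul _).neg).sub
      (hasDerivAt_riccatiDefect (hQ q hq) (hP q hq))
  have hvanish : Tendsto (fun q => -(c / (β + 1) * q ^ (β + 1)) - riccatiDefect Q P q)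
      (𝓝[>] 0) (𝓝 0) := by
    simpa only [mul_zero, neg_zero, sub_zero] using
      (((tendsto_rpow_nhdsGT_zero (by linarith)).const_mul (c / (β + 1))).neg).sub
        (tendsto_riccatiDefect hP1 hlim)
  refine sub_nonpos.1 (nonpos_of_hasDerivAt_nonpos hderiv (fun q hq => ?_) hvanish hq)
  have hpow : c / (β + 1) * ((β + 1) * q ^ (β + 1 - 1)) = c * q ^ β := by
    rw [add_sub_cancel_right]; field_simp
  linarith [hR q hq]

end Derivatives

variable (hlim : Tendsto (fun q => Q q / q) (𝓝[>] 0) (𝓝 1))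
include hlim

/- The derivative of `q / Q q` is `1 - riccatiDefect Q P q / Q q ^ 2`. -/
lemma le_div_one_add_of_riccatiDefect_nonpos (hQ0 : ∀ q, 0 < q → 0 < Q q)
    (hG : ∀ q, 0 < q → riccatiDefect Q P q ≤ 0) (hq : 0 < q) : Q q ≤ q / (1 + q) := by
  have hderiv : ∀ q, 0 < q → HasDerivAt (fun q => 1 + q - q / Q q)
      (1 - (1 * Q q - q * P q) / Q q ^ 2) q := fun q hq =>
    ((hasDerivAt_id q).const_add 1).sub ((hasDerivAt_id q).div (hQ q hq) (hQ0 q hq).ne')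
  have hvanish : Tendsto (fun q => 1 + q - q / Q q) (𝓝[>] 0) (𝓝 0) := by
    have hid : Tendsto (fun q : ℝ => q) (𝓝[>] 0) (𝓝 0) := nhdsWithin_le_nhds
    simpa only [inv_div, add_zero, inv_one, sub_self] using
      (hid.const_add 1).sub (hlim.inv₀ one_ne_zero)
  have hle : 1 + q - q / Q q ≤ 0 := by
    refine nonpos_of_hasDerivAt_nonpos hderiv (fun q hq => ?_) hvanish hq
    have hQq := hQ0 q hq
    have hGq : q * P q - Q q + Q q ^ 2 ≤ 0 := hG q hq
    rw [sub_nonpos, one_le_div (by positivity)]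
    linarith
  rw [sub_nonpos, le_div_iff₀ (hQ0 q hq)] at hle
  rw [le_div_iff₀ (by positivity)]
  linarith

/- The derivative of `Q q / q` is `(riccatiDefect Q P q - Q q ^ 2) / q ^ 2`, where
`Q q ^ 2 / q ^ 2 ≤ 1 / (1 + q) ^ 2` by the upper bound on `Q`. -/
lemma div_one_add_sub_le_of_le_riccatiDefect (hβ : 0 < β) (hQ0 : ∀ q, 0 < q → 0 ≤ Q q)
    (hQ1 : ∀ q, 0 < q → Q q ≤ q / (1 + q))
    (hG : ∀ q, 0 < q → -(c / (β + 1) * q ^ (β + 1)) ≤ riccatiDefect Q P q) (hq : 0 < q) :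
    q / (1 + q) - Q q ≤ c / (β * (β + 1)) * q ^ (β + 1) := by
  have hderiv : ∀ q, 0 < q →
      HasDerivAt (fun q => (1 + q)⁻¹ - Q q / q - c / (β * (β + 1)) * q ^ β)
        (-1 / (1 + q) ^ 2 - (P q * q - Q q * 1) / q ^ 2
          - c / (β * (β + 1)) * (β * q ^ (β - 1))) q := fun q hq =>
    (((((hasDerivAt_id q).const_add 1).inv (ne_of_gt (add_pos one_pos hq)))).sub
      ((hQ q hq).div (hasDerivAt_id q) hq.ne')).sub
      ((hasDerivAt_rpow_const (Or.inl hq.ne')).const_mul _)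
  have hvanish : Tendsto (fun q => (1 + q)⁻¹ - Q q / q - c / (β * (β + 1)) * q ^ β)
      (𝓝[>] 0) (𝓝 0) := by
    have hid : Tendsto (fun q : ℝ => q) (𝓝[>] 0) (𝓝 0) := nhdsWithin_le_nhds
    simpa only [add_zero, inv_one, sub_self, mul_zero, sub_zero] using
      (((hid.const_add 1).inv₀ (by norm_num)).sub hlim).sub
        ((tendsto_rpow_nhdsGT_zero hβ).const_mul _)
  have hle : (1 + q)⁻¹ - Q q / q - c / (β * (β + 1)) * q ^ β ≤ 0 := by
    refine nonpos_of_hasDerivAt_nonpos hderiv (fun q hq => ?_) hvanish hq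
    have hGq : -(c / (β + 1) * q ^ (β + 1)) ≤ q * P q - Q q + Q q ^ 2 := hG q hq
    have hsq : (Q q / q) ^ 2 ≤ ((1 + q)⁻¹) ^ 2 := by
      refine pow_le_pow_left₀ (div_nonneg (hQ0 q hq) hq.le) ?_ 2
      rw [div_le_iff₀ hq, inv_mul_eq_div]
      exact hQ1 q hq
    have hpow : c / (β * (β + 1)) * (β * q ^ (β - 1)) = c / (β + 1) * q ^ (β + 1) / q ^ 2 := by
      rw [show β + 1 = β - 1 + 2 by ring, rpow_add hq, rpow_two]
      field_simp
    have hmain : -((Q q / q) ^ 2) - c / (β + 1) * q ^ (β + 1) / q ^ 2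
        ≤ (P q * q - Q q * 1) / q ^ 2 := by
      rw [div_pow, ← neg_div, ← sub_div]
      exact div_le_div_of_nonneg_right (by linarith) (sq_nonneg q)
    rw [neg_div, one_div, ← inv_pow, hpow]
    linarith
  have hmul := mul_le_mul_of_nonneg_left (sub_nonpos.1 hle) hq.le
  rw [rpow_add_one hq.ne']
  calc q / (1 + q) - Q q = q * ((1 + q)⁻¹ - Q q / q) := by field_simp
    _ ≤ q * (c / (β * (β + 1)) * q ^ β) := hmul
    _ = _ := by ring

end Riccati

section Transforms

variable {ν : Measure ℝ} {q : ℝ}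

/-- The `n`-th moment of `ν` weighted by `exp (-q x)`; it is `(-1)ⁿ` times the `n`-th derivative of
the Laplace transform of `ν`. -/
noncomputable def laplaceMoment (ν : Measure ℝ) (n : ℕ) (q : ℝ) : ℝ :=
  ∫ x, x ^ n * exp (-(q * x)) ∂ν

/-- The Bernstein transform of `ν`. Unlike the Laplace transform, it only needs a finite first
moment on `(0, ∞)`, and `ν` may have infinite mass near `0`. -/
noncomputable def bernsteinTransform (ν : Measure ℝ) (q : ℝ) : ℝ :=
  ∫ x, (1 - exp (-(q * x))) ∂ν

variable (hν : ∀ᵐ x ∂ν, 0 ≤ x)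
include hν

lemma laplaceMoment_nonneg (n : ℕ) : 0 ≤ laplaceMoment ν n q :=
  integral_nonneg_of_ae (hν.mono fun x hx => by positivity)

lemma bernsteinTransform_nonneg (hq : 0 ≤ q) : 0 ≤ bernsteinTransform ν q :=
  integral_nonneg_of_ae (hν.mono fun _ hx => one_sub_exp_neg_nonneg (mul_nonneg hq hx))

variable (hint : Integrable (fun x => x) ν)
include hint

lemma integrable_one_sub_exp_neg (hq : 0 ≤ q) : Integrable (fun x => 1 - exp (-(q * x))) ν := by
  refine (hint.const_mul q).mono' (by fun_prop) (hν.mono fun x hx => ?_)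
  rw [norm_of_nonneg (one_sub_exp_neg_nonneg (mul_nonneg hq hx))]
  linarith [one_sub_le_exp_neg (q * x)]

lemma integrable_mul_exp_neg (hq : 0 ≤ q) : Integrable (fun x => x * exp (-(q * x))) ν := by
  refine hint.mono' (by fun_prop) (hν.mono fun x hx => ?_)
  rw [norm_of_nonneg (by positivity)]
  exact mul_le_of_le_one_right hx (exp_le_one_iff.2 (neg_nonpos.2 (mul_nonneg hq hx)))

lemma integrable_pow_succ_mul_exp_neg (hq : 0 < q) (n : ℕ) :
    Integrable (fun x => x ^ (n + 1) * exp (-(q * x))) ν := by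
  refine (hint.const_mul (n.factorial / q ^ n)).mono' (by fun_prop) (hν.mono fun x hx => ?_)
  rw [norm_of_nonneg (by positivity), pow_succ, mul_right_comm]
  exact mul_le_mul_of_nonneg_right (pow_mul_exp_neg_mul_le hq hx n) hx

lemma laplaceMoment_zero_eq_sub [IsFiniteMeasure ν] (hq : 0 ≤ q) :
    laplaceMoment ν 0 q = ν.real univ - bernsteinTransform ν q := by
  have hone : ν.real univ = ∫ _, (1 : ℝ) ∂ν := by rw [integral_const, smul_eq_mul, mul_one]
  rw [hone, bernsteinTransform,
    ← integral_sub (integrable_const 1) (integrable_one_sub_exp_neg hν hint hq)]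
  simp only [laplaceMoment, pow_zero, one_mul, sub_sub_cancel]

lemma bernsteinTransform_pos (hpos : 0 < ∫ x, x ∂ν) (hq : 0 < q) :
    0 < bernsteinTransform ν q := by
  refine (bernsteinTransform_nonneg hν hq.le).lt_of_ne' fun h0 => hpos.ne' ?_
  have hzero := (integral_eq_zero_iff_of_nonneg_ae
    (hν.mono fun x hx => one_sub_exp_neg_nonneg (mul_nonneg hq.le hx))
    (integrable_one_sub_exp_neg hν hint hq.le)).1 h0
  refine integral_eq_zero_of_ae (hzero.mono fun x hx => ?_)
  have hexp : exp (-(q * x)) = 1 := (sub_eq_zero.1 hx).symm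
  exact (mul_eq_zero.1 (neg_eq_zero.1 (exp_eq_one_iff _ |>.1 hexp))).resolve_left hq.ne'

lemma laplaceMoment_one_le (hq : 0 ≤ q) : laplaceMoment ν 1 q ≤ ∫ x, x ∂ν := by
  simp only [laplaceMoment, pow_one]
  refine integral_mono_ae (integrable_mul_exp_neg hν hint hq) hint (hν.mono fun x hx => ?_)
  exact mul_le_of_le_one_right hx (exp_le_one_iff.2 (neg_nonpos.2 (mul_nonneg hq hx)))

lemma hasDerivAt_bernsteinTransform (hq : 0 < q) :
    HasDerivAt (bernsteinTransform ν) (laplaceMoment ν 1 q) q := by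
  refine (hasDerivAt_integral_of_dominated_loc_of_deriv_le (bound := fun x => x)
    (F' := fun s x => x ^ 1 * exp (-(s * x))) (Ioi_mem_nhds hq)
    (Eventually.of_forall fun s => by fun_prop) (integrable_one_sub_exp_neg hν hint hq.le)
    (by fun_prop) (hν.mono fun x hx s hs => ?_) hint (ae_of_all _ fun x s _ => ?_)).2
  · rw [norm_of_nonneg (by positivity), pow_one]
    exact mul_le_of_le_one_right hx (exp_le_one_iff.2 (neg_nonpos.2 (mul_nonneg (le_of_lt hs) hx)))
  · refine ((hasDerivAt_mul_const x).fun_neg.exp.const_sub 1).congr_deriv ?_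
    ring

lemma hasDerivAt_laplaceMoment_succ (hq : 0 < q) (n : ℕ) :
    HasDerivAt (laplaceMoment ν (n + 1)) (-laplaceMoment ν (n + 2) q) q := by
  have hhalf := half_pos hq
  have h := (hasDerivAt_integral_of_dominated_loc_of_deriv_le
    (F := fun s x => x ^ (n + 1) * exp (-(s * x)))
    (F' := fun s x => -(x ^ (n + 2) * exp (-(s * x))))
    (bound := fun x => x ^ (n + 2) * exp (-(q / 2 * x))) (Ioi_mem_nhds (half_lt_self hq))
    (Eventually.of_forall fun s => by fun_prop) (integrable_pow_succ_mul_exp_neg hν hint hq n)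
    (by fun_prop) (hν.mono fun x hx s hs => ?_)
    (integrable_pow_succ_mul_exp_neg hν hint hhalf (n + 1)) (ae_of_all _ fun x s _ => ?_)).2
  · rwa [integral_neg] at h
  · rw [norm_neg, norm_of_nonneg (by positivity)]
    gcongr
    exact le_of_lt hs
  · refine ((hasDerivAt_mul_const x).fun_neg.exp.const_mul (x ^ (n + 1))).congr_deriv ?_
    ring

lemma tendsto_bernsteinTransform_div :
    Tendsto (fun q => bernsteinTransform ν q / q) (𝓝[>] 0) (𝓝 (∫ x, x ∂ν)) := by
  simp only [bernsteinTransform, ← integral_div]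
  refine tendsto_integral_filter_of_dominated_convergence (fun x => x)
    (Eventually.of_forall fun q => by fun_prop) ?_ hint (ae_of_all _ fun x => ?_)
  · filter_upwards [self_mem_nhdsWithin] with q hq
    filter_upwards [hν] with x hx
    have hq' : 0 < q := hq
    rw [norm_of_nonneg (div_nonneg (one_sub_exp_neg_nonneg (by positivity)) hq'.le),
      div_le_iff₀ hq']
    linarith [one_sub_le_exp_neg (q * x)]
  · have hderiv : HasDerivAt (fun q => 1 - exp (-(q * x))) x 0 := by
      refine ((hasDerivAt_mul_const x).fun_neg.exp.const_sub 1).congr_deriv ?_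
      simp only [zero_mul, neg_zero, exp_zero, one_mul, neg_neg]
    refine (hderiv.tendsto_slope_zero_right).congr fun q => ?_
    rw [zero_add, zero_mul, neg_zero, exp_zero, sub_self, sub_zero, smul_eq_mul, inv_mul_eq_div]

omit hν in
lemma measure_univ_le_of_bernsteinTransform_le (hpos : ∀ᵐ x ∂ν, 0 < x) {c : ℝ}
    (hc : ∀ q, 0 < q → bernsteinTransform ν q ≤ c) : ν univ ≤ ENNReal.ofReal c := by
  have hν : ∀ᵐ x ∂ν, 0 ≤ x := hpos.mono fun _ => le_of_lt
  let F : ℕ → ℝ → ℝ≥0∞ := fun n x => ENNReal.ofReal (1 - exp (-((n + 1 : ℝ) * x)))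
  have hF : ∀ n, ∫⁻ x, F n x ∂ν ≤ ENNReal.ofReal c := fun n => by
    have hn : (0 : ℝ) < n + 1 := by positivity
    rw [← ofReal_integral_eq_lintegral_ofReal (integrable_one_sub_exp_neg hν hint hn.le)
      (hν.mono fun x hx => one_sub_exp_neg_nonneg (mul_nonneg hn.le hx))]
    exact ENNReal.ofReal_le_ofReal (hc _ hn)
  have hlim : ∀ᵐ x ∂ν, liminf (fun n => F n x) atTop = 1 := hpos.mono fun x hx => by
    have hexp : Tendsto (fun n : ℕ => exp (-((n + 1 : ℝ) * x))) atTop (𝓝 0) :=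
      tendsto_exp_neg_atTop_nhds_zero.comp
        ((tendsto_natCast_atTop_atTop.atTop_add tendsto_const_nhds).atTop_mul_const hx)
    have hofReal := ENNReal.tendsto_ofReal (hexp.const_sub 1)
    rw [sub_zero, ENNReal.ofReal_one] at hofReal
    exact hofReal.liminf_eq
  calc ν univ = ∫⁻ x, liminf (fun n => F n x) atTop ∂ν := by
        rw [lintegral_congr_ae hlim, lintegral_one]
    _ ≤ liminf (fun n => ∫⁻ x, F n x ∂ν) atTop := lintegral_liminf_le fun n => by fun_prop
    _ ≤ liminf (fun _ : ℕ => ENNReal.ofReal c) atTop :=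
        liminf_le_liminf (Eventually.of_forall hF)
    _ = ENNReal.ofReal c := liminf_const _

end Transforms

section WeakConvergence

variable {ι : Type*} {l : Filter ι}

lemma tendsto_of_forall_approx {X : Type*} [PseudoMetricSpace X] {u : ι → X} {a : X}
    (h : ∀ δ > 0, ∃ (v : ι → X) (b : X), Tendsto v l (𝓝 b) ∧
      (∀ᶠ i in l, dist (u i) (v i) ≤ δ) ∧ dist a b ≤ δ) : Tendsto u l (𝓝 a) := by
  refine Metric.tendsto_nhds.2 fun η hη => ?_
  obtain ⟨v, b, hv, huv, hab⟩ := h (η / 4) (by positivity)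
  filter_upwards [huv, Metric.tendsto_nhds.1 hv (η / 4) (by positivity)] with i hi hi'
  linarith [dist_triangle4_right (u i) a (v i) b, dist_triangle (u i) (v i) a,
    dist_triangle (v i) b a, dist_comm a b]

section UnitInterval

lemma integrable_of_continuousOn_of_ae_mem {μ : Measure ℝ} [IsFiniteMeasure μ] {s : Set ℝ}
    (hs : MeasurableSet s) (hμ : ∀ᵐ t ∂μ, t ∈ s) {h : ℝ → ℝ} (hc : ContinuousOn h s) {M : ℝ}
    (hM : ∀ t ∈ s, |h t| ≤ M) : Integrable h μ := by
  refine Integrable.of_bound (C := M) ?_ (hμ.mono hM)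
  rw [← Measure.restrict_eq_self_of_ae_mem hμ]
  exact hc.aestronglyMeasurable hs

lemma integrable_of_continuousOn_Icc {μ : Measure ℝ} [IsFiniteMeasure μ] {a b : ℝ}
    (hμ : ∀ᵐ t ∂μ, t ∈ Icc a b) {h : ℝ → ℝ} (hc : ContinuousOn h (Icc a b)) : Integrable h μ :=
  have ⟨_, hM⟩ := isCompact_Icc.exists_bound_of_continuousOn hc
  integrable_of_continuousOn_of_ae_mem measurableSet_Icc hμ hc hM

variable {μ : ι → Measure ℝ} {μ₀ : Measure ℝ} [∀ i, IsFiniteMeasure (μ i)] [IsFiniteMeasure μ₀]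
  {h : ℝ → ℝ}

section Closed

variable (hμ : ∀ i, ∀ᵐ t ∂μ i, t ∈ Icc (0 : ℝ) 1) (hμ₀ : ∀ᵐ t ∂μ₀, t ∈ Icc (0 : ℝ) 1)
  (hmom : ∀ n : ℕ, Tendsto (fun i => ∫ t, t ^ n ∂μ i) l (𝓝 (∫ t, t ^ n ∂μ₀)))
include hμ hμ₀ hmom

lemma tendsto_integral_polynomial (p : Polynomial ℝ) :
    Tendsto (fun i => ∫ t, p.eval t ∂μ i) l (𝓝 (∫ t, p.eval t ∂μ₀)) := by
  have hint : ∀ (ν : Measure ℝ) [IsFiniteMeasure ν], (∀ᵐ t ∂ν, t ∈ Icc (0 : ℝ) 1) →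
      ∀ q : Polynomial ℝ, Integrable (fun t => q.eval t) ν := fun ν _ hν q =>
    integrable_of_continuousOn_Icc hν q.continuous.continuousOn
  induction p using Polynomial.induction_on' with
  | add p q hp hq =>
    simp only [Polynomial.eval_add]
    rw [integral_add (hint μ₀ hμ₀ p) (hint μ₀ hμ₀ q)]
    refine (hp.add hq).congr fun i => ?_
    rw [integral_add (hint (μ i) (hμ i) p) (hint (μ i) (hμ i) q)]
  | monomial n a =>
    simp only [Polynomial.eval_monomial, integral_const_mul]
    exact (hmom n).const_mul a

lemma tendsto_integral_of_forall_tendsto_integral_pow (hc : ContinuousOn h (Icc 0 1)) :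
    Tendsto (fun i => ∫ t, h t ∂μ i) l (𝓝 (∫ t, h t ∂μ₀)) := by
  refine tendsto_of_forall_approx fun δ hδ => ?_
  let m : ℝ := μ₀.real univ + 1
  have hm0 : 0 < m := by positivity
  obtain ⟨p, hp⟩ := exists_polynomial_near_of_continuousOn 0 1 h hc (δ / m) (by positivity)
  have happrox : ∀ (ν : Measure ℝ) [IsFiniteMeasure ν], (∀ᵐ t ∂ν, t ∈ Icc (0 : ℝ) 1) →
      ν.real univ ≤ m → dist (∫ t, h t ∂ν) (∫ t, p.eval t ∂ν) ≤ δ := fun ν _ hν hνm => by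
    rw [dist_eq_norm, ← integral_sub (integrable_of_continuousOn_Icc hν hc)
      (integrable_of_continuousOn_Icc hν p.continuous.continuousOn)]
    calc ‖∫ t, (h t - p.eval t) ∂ν‖ ≤ δ / m * ν.real univ :=
          norm_integral_le_of_norm_le_const (hν.mono fun t ht => by
            rw [norm_sub_rev]; exact (hp t ht).le)
      _ ≤ δ / m * m := by gcongr
      _ = δ := div_mul_cancel₀ _ hm0.ne'
  have hmass : Tendsto (fun i => (μ i).real univ) l (𝓝 (μ₀.real univ)) := by
    simpa only [pow_zero, integral_const, smul_eq_mul, mul_one] using hmom 0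
  refine ⟨_, _, tendsto_integral_polynomial hμ hμ₀ hmom p, ?_,
    happrox μ₀ hμ₀ (lt_add_one _).le⟩
  filter_upwards [hmass.eventually_lt_const (lt_add_one _)] with i hi
  exact happrox (μ i) (hμ i) hi.le

end Closed

lemma continuousOn_Icc_mul_one_sub_pow {M : ℝ} (hc : ContinuousOn h (Ioc 0 1))
    (hM : ∀ t ∈ Ioc (0 : ℝ) 1, |h t| ≤ M) (n : ℕ) :
    ContinuousOn (fun t => h t * (1 - (1 - t) ^ n)) (Icc 0 1) := by
  intro t ht
  rcases ht.1.eq_or_lt with rfl | ht0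
  · have hzero : Tendsto (fun t : ℝ => M * |1 - (1 - t) ^ n|) (𝓝[Icc 0 1] 0) (𝓝 0) := by
      have hcont : Continuous fun t : ℝ => M * |1 - (1 - t) ^ n| := by fun_prop
      have h := hcont.tendsto 0
      rw [sub_zero, one_pow, sub_self, abs_zero, mul_zero] at h
      exact h.mono_left nhdsWithin_le_nhds
    rw [ContinuousWithinAt, sub_zero, one_pow, sub_self, mul_zero]
    refine squeeze_zero_norm' ?_ hzero
    filter_upwards [self_mem_nhdsWithin] with t ht
    rw [norm_mul, norm_eq_abs, norm_eq_abs]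
    rcases ht.1.eq_or_lt with rfl | ht0
    · rw [sub_zero, one_pow, sub_self, abs_zero, mul_zero, mul_zero]
    · exact mul_le_mul_of_nonneg_right (hM t ⟨ht0, ht.2⟩) (abs_nonneg _)
  · have hnear : Ioc (0 : ℝ) 1 ∈ 𝓝[Icc 0 1] t :=
      mem_nhdsWithin.2 ⟨Ioi 0, isOpen_Ioi, ht0, fun s hs => ⟨hs.1, hs.2.2⟩⟩
    exact ((hc t ⟨ht0, ht.2⟩).mono_of_mem_nhdsWithin hnear).mul (by fun_prop)

lemma tendsto_integral_one_sub_pow (hμ₀ : ∀ᵐ t ∂μ₀, t ∈ Ioc (0 : ℝ) 1) :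
    Tendsto (fun n : ℕ => ∫ t, (1 - t) ^ n ∂μ₀) atTop (𝓝 0) := by
  rw [← integral_zero ℝ ℝ (μ := μ₀)]
  refine tendsto_integral_of_dominated_convergence (fun _ => 1) (fun n => by fun_prop)
    (integrable_const 1) (fun n => hμ₀.mono fun t ht => ?_) (hμ₀.mono fun t ht => ?_)
  · rw [norm_pow]
    exact pow_le_one₀ (norm_nonneg _) (abs_le.2 ⟨by linarith [ht.2], by linarith [ht.1]⟩)
  · exact tendsto_pow_atTop_nhds_zero_of_lt_one (by linarith [ht.2]) (by linarith [ht.1])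

lemma dist_integral_mul_one_sub_pow_le {ν : Measure ℝ} [IsFiniteMeasure ν]
    (hν : ∀ᵐ t ∂ν, t ∈ Ioc (0 : ℝ) 1) (hc : ContinuousOn h (Ioc 0 1)) {M : ℝ}
    (hM : ∀ t ∈ Ioc (0 : ℝ) 1, |h t| ≤ M) (n : ℕ) :
    dist (∫ t, h t ∂ν) (∫ t, h t * (1 - (1 - t) ^ n) ∂ν) ≤ ∫ t, M * (1 - t) ^ n ∂ν := by
  have hν' : ∀ᵐ t ∂ν, t ∈ Icc (0 : ℝ) 1 := hν.mono fun _ ht => Ioc_subset_Icc_self ht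
  rw [dist_eq_norm, ← integral_sub
    (integrable_of_continuousOn_of_ae_mem measurableSet_Ioc hν hc hM)
    (integrable_of_continuousOn_Icc hν' (continuousOn_Icc_mul_one_sub_pow hc hM n))]
  refine norm_integral_le_of_norm_le (integrable_of_continuousOn_Icc hν' (by fun_prop))
    (hν.mono fun t ht => ?_)
  have ht1 : 0 ≤ 1 - t := sub_nonneg.2 ht.2
  rw [show h t - h t * (1 - (1 - t) ^ n) = h t * (1 - t) ^ n by ring, norm_mul,
    norm_of_nonneg (pow_nonneg ht1 n)]
  exact mul_le_mul_of_nonneg_right (hM t ht) (pow_nonneg ht1 n)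

/- Unlike on `[0, 1]`, mass could escape to the missing endpoint `0`. It does not, because the
limit measure does not charge `0` and `∫ (1 - t) ^ n` converges for every `n`. -/
lemma tendsto_integral_of_forall_tendsto_integral_pow_of_Ioc
    (hμ : ∀ i, ∀ᵐ t ∂μ i, t ∈ Ioc (0 : ℝ) 1) (hμ₀ : ∀ᵐ t ∂μ₀, t ∈ Ioc (0 : ℝ) 1)
    (hmom : ∀ n : ℕ, Tendsto (fun i => ∫ t, t ^ n ∂μ i) l (𝓝 (∫ t, t ^ n ∂μ₀)))
    (hc : ContinuousOn h (Ioc 0 1)) {M : ℝ} (hM : ∀ t ∈ Ioc (0 : ℝ) 1, |h t| ≤ M) :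
    Tendsto (fun i => ∫ t, h t ∂μ i) l (𝓝 (∫ t, h t ∂μ₀)) := by
  have hconv : ∀ {g : ℝ → ℝ}, ContinuousOn g (Icc 0 1) →
      Tendsto (fun i => ∫ t, g t ∂μ i) l (𝓝 (∫ t, g t ∂μ₀)) := fun hg =>
    tendsto_integral_of_forall_tendsto_integral_pow
      (fun i => (hμ i).mono fun _ ht => Ioc_subset_Icc_self ht)
      (hμ₀.mono fun _ ht => Ioc_subset_Icc_self ht) hmom hg
  have hsmall : Tendsto (fun n : ℕ => ∫ t, M * (1 - t) ^ n ∂μ₀) atTop (𝓝 0) := by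
    simpa only [integral_const_mul, mul_zero] using
      (tendsto_integral_one_sub_pow hμ₀).const_mul M
  refine tendsto_of_forall_approx fun δ hδ => ?_
  obtain ⟨n, hn⟩ := (hsmall.eventually_lt_const hδ).exists
  refine ⟨_, _, hconv (continuousOn_Icc_mul_one_sub_pow hc hM n), ?_,
    (dist_integral_mul_one_sub_pow_le hμ₀ hc hM n).trans hn.le⟩
  filter_upwards [(hconv (by fun_prop)).eventually_lt_const hn] with i hi
  exact (dist_integral_mul_one_sub_pow_le (hμ i) hc hM n).trans hi.le

end UnitInterval

lemma tendsto_integral_of_forall_tendsto_laplaceMoment {ν : ι → Measure ℝ} {ν₀ : Measure ℝ}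
    [∀ i, IsFiniteMeasure (ν i)] [IsFiniteMeasure ν₀] (hν : ∀ i, ∀ᵐ x ∂ν i, 0 ≤ x)
    (hν₀ : ∀ᵐ x ∂ν₀, 0 ≤ x)
    (hlap : ∀ n : ℕ, Tendsto (fun i => laplaceMoment (ν i) 0 n) l (𝓝 (laplaceMoment ν₀ 0 n)))
    {ψ : ℝ → ℝ} (hψ : ContinuousOn ψ (Ici 0)) {M : ℝ} (hM : ∀ x ∈ Ici (0 : ℝ), |ψ x| ≤ M) :
    Tendsto (fun i => ∫ x, ψ x ∂ν i) l (𝓝 (∫ x, ψ x ∂ν₀)) := by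
  have hmaps : MapsTo (fun t => -log t) (Ioc 0 1) (Ici 0) := fun t ht =>
    neg_nonneg.2 (log_nonpos ht.1.le ht.2)
  have hcont : ContinuousOn (fun t => ψ (-log t)) (Ioc 0 1) :=
    hψ.comp (continuousOn_log.mono fun t ht => ht.1.ne').neg hmaps
  have hmeas : Measurable fun x : ℝ => exp (-x) := by fun_prop
  have hmem : ∀ ρ : Measure ℝ, (∀ᵐ x ∂ρ, 0 ≤ x) →
      ∀ᵐ t ∂ρ.map (fun x => exp (-x)), t ∈ Ioc (0 : ℝ) 1 := fun ρ hρ =>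
    (ae_map_iff hmeas.aemeasurable measurableSet_Ioc).2 <| hρ.mono fun x hx =>
      ⟨exp_pos _, exp_le_one_iff.2 (neg_nonpos.2 hx)⟩
  have hpow : ∀ (ρ : Measure ℝ) (n : ℕ),
      ∫ t, t ^ n ∂ρ.map (fun x => exp (-x)) = laplaceMoment ρ 0 n := fun ρ n => by
    rw [integral_map hmeas.aemeasurable (by fun_prop)]
    simp only [laplaceMoment, pow_zero, one_mul, ← exp_nat_mul, mul_neg]
  have hpull : ∀ ρ : Measure ℝ, (∀ᵐ x ∂ρ, 0 ≤ x) →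
      ∫ t, ψ (-log t) ∂ρ.map (fun x => exp (-x)) = ∫ x, ψ x ∂ρ := fun ρ hρ => by
    rw [integral_map hmeas.aemeasurable]
    · simp only [log_exp, neg_neg]
    · rw [← Measure.restrict_eq_self_of_ae_mem (hmem ρ hρ)]
      exact hcont.aestronglyMeasurable measurableSet_Ioc
  have h := tendsto_integral_of_forall_tendsto_integral_pow_of_Ioc (l := l)
    (fun i => hmem (ν i) (hν i)) (hmem ν₀ hν₀) (by simpa only [hpow] using hlap) hcont
    fun t ht => hM _ (hmaps ht)
  rw [hpull ν₀ hν₀] at h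
  exact h.congr fun i => hpull (ν i) (hν i)

end WeakConvergence

section DensityMeasure

/-- The measure on `(0, ∞)` with density `f`; negative values of `f` are truncated to `0`. -/
noncomputable def densityMeasure (f : ℝ → ℝ) : Measure ℝ :=
  (volume.restrict (Ioi 0)).withDensity fun x => ENNReal.ofReal (f x)

instance (f : ℝ → ℝ) : SFinite (densityMeasure f) :=
  inferInstanceAs (SFinite (Measure.withDensity _ _))

variable {f : ℝ → ℝ}

lemma densityMeasure_absolutelyContinuous : densityMeasure f ≪ volume.restrict (Ioi 0) :=
  withDensity_absolutelyContinuous _ _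

lemma ae_densityMeasure_pos : ∀ᵐ x ∂densityMeasure f, 0 < x :=
  densityMeasure_absolutelyContinuous.ae_le (ae_restrict_mem measurableSet_Ioi)

lemma ae_densityMeasure_nonneg : ∀ᵐ x ∂densityMeasure f, 0 ≤ x :=
  ae_densityMeasure_pos.mono fun _ => le_of_lt

lemma isFiniteMeasure_densityMeasure (hf : IntegrableOn f (Ioi 0)) :
    IsFiniteMeasure (densityMeasure f) :=
  isFiniteMeasure_withDensity_ofReal hf.2

section

variable (hf : AEMeasurable f (volume.restrict (Ioi 0)))
include hf

lemma lintegral_densityMeasure {g : ℝ → ℝ≥0∞} (hg : AEMeasurable g (volume.restrict (Ioi 0))) :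
    ∫⁻ x, g x ∂densityMeasure f = ∫⁻ x in Ioi 0, ENNReal.ofReal (f x) * g x :=
  lintegral_withDensity_eq_lintegral_mul₀ hf.ennreal_ofReal hg

variable (hf0 : ∀ᵐ x ∂volume.restrict (Ioi (0 : ℝ)), 0 ≤ f x)
include hf0

lemma integral_densityMeasure (g : ℝ → ℝ) :
    ∫ x, g x ∂densityMeasure f = ∫ x in Ioi 0, f x * g x := by
  rw [densityMeasure, integral_withDensity_eq_integral_toReal_smul₀ hf.ennreal_ofReal
    (ae_of_all _ fun _ => ENNReal.ofReal_lt_top)]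
  exact integral_congr_ae (hf0.mono fun x hx => by
    simp only [ENNReal.toReal_ofReal hx, smul_eq_mul])

lemma setIntegral_densityMeasure {s : Set ℝ} (hs : MeasurableSet s) (hs0 : s ⊆ Ioi 0)
    (g : ℝ → ℝ) : ∫ x in s, g x ∂densityMeasure f = ∫ x in s, f x * g x := by
  rw [← integral_indicator hs, integral_densityMeasure hf hf0, ← inter_eq_self_of_subset_left hs0,
    ← Measure.restrict_restrict hs, ← integral_indicator hs, inter_eq_self_of_subset_left hs0]
  simp only [indicator_mul_right]

lemma integrable_densityMeasure_iff {g : ℝ → ℝ} :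
    Integrable g (densityMeasure f) ↔ IntegrableOn (fun x => f x * g x) (Ioi 0) := by
  rw [densityMeasure, integrable_withDensity_iff_integrable_smul₀' hf.ennreal_ofReal
    (ae_of_all _ fun _ => ENNReal.ofReal_lt_top)]
  exact integrable_congr (hf0.mono fun x hx => by
    simp only [ENNReal.toReal_ofReal hx, smul_eq_mul])

end

end DensityMeasure

section ProductMeasure

lemma integral_integral_toReal {X Y : Type*} [MeasurableSpace X] [MeasurableSpace Y]
    {μ : Measure X} {ν : Measure Y} [SFinite ν] {f : X × Y → ℝ≥0∞}
    (hf : AEMeasurable f (μ.prod ν)) (hfin : ∀ᵐ x ∂μ, ∫⁻ y, f (x, y) ∂ν < ∞) :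
    ∫ x, ∫ y, (f (x, y)).toReal ∂ν ∂μ = (∫⁻ p, f p ∂μ.prod ν).toReal := by
  have hsection : ∀ᵐ x ∂μ, AEMeasurable (fun y => f (x, y)) ν := by
    filter_upwards [Measure.ae_ae_of_ae_prod hf.ae_eq_mk] with x hx
    exact ⟨_, hf.measurable_mk.comp measurable_prodMk_left, hx⟩
  have hinner : ∀ᵐ x ∂μ, ∫ y, (f (x, y)).toReal ∂ν = (∫⁻ y, f (x, y) ∂ν).toReal := by
    filter_upwards [hsection, hfin] with x hx hx'
    exact integral_toReal hx (ae_lt_top' hx hx'.ne)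
  rw [integral_congr_ae hinner, integral_toReal hf.lintegral_prod_right' hfin, lintegral_prod f hf]

/-- The pairs of sizes whose coagulation carries the first size across `x`. -/
def crossing (x : ℝ) : Set (ℝ × ℝ) := {p | p.1 < x ∧ x < p.1 + p.2}

variable {ρ : Measure (ℝ × ℝ)} {g : ℝ × ℝ → ℝ≥0∞}

lemma measurableSet_crossing (x : ℝ) : MeasurableSet (crossing x) :=
  (measurableSet_lt measurable_fst measurable_const).inter
    (measurableSet_lt measurable_const (measurable_fst.add measurable_snd))

lemma aemeasurable_indicator_crossing (hg : AEMeasurable g ρ) (τ : Measure ℝ) :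
    AEMeasurable (fun q : ℝ × ℝ × ℝ => (crossing q.1).indicator g q.2) (τ.prod ρ) := by
  have hmeas : MeasurableSet
      ({q : ℝ × ℝ × ℝ | q.2.1 < q.1} ∩ {q | q.1 < q.2.1 + q.2.2}) :=
    (measurableSet_lt (by fun_prop) (by fun_prop)).inter
      (measurableSet_lt (by fun_prop) (by fun_prop))
  exact (hg.comp_quasiMeasurePreserving Measure.quasiMeasurePreserving_snd).indicator hmeas

variable [SFinite ρ]

lemma lintegral_lintegral_crossing (hg : AEMeasurable g ρ) (τ : Measure ℝ) [SFinite τ] :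
    ∫⁻ x, ∫⁻ p in crossing x, g p ∂ρ ∂τ = ∫⁻ p, g p * τ (Ioo p.1 (p.1 + p.2)) ∂ρ := by
  simp only [← lintegral_indicator (measurableSet_crossing _)]
  rw [lintegral_lintegral_swap (aemeasurable_indicator_crossing hg τ)]
  refine lintegral_congr fun p => ?_
  rw [← lintegral_indicator_const measurableSet_Ioo]
  rfl

lemma aemeasurable_lintegral_crossing (hg : AEMeasurable g ρ) (τ : Measure ℝ) :
    AEMeasurable (fun x => ∫⁻ p in crossing x, g p ∂ρ) τ := by
  simp only [← lintegral_indicator (measurableSet_crossing _)]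
  exact (aemeasurable_indicator_crossing hg τ).lintegral_prod_right'

end ProductMeasure

section Kernel

/-- Symmetric kernels lying between `2` and `2 + ε ((y / z) ^ α + (z / y) ^ α)` on `(0, ∞)²`: a
version of `Kern ε W`, for `GoodW α W`, that is only measurable and need not be homogeneous. -/
structure IsPerturbedConstantKernel (α ε : ℝ) (K : ℝ → ℝ → ℝ) : Prop where
  aemeasurable : AEMeasurable (Function.uncurry K) (volume.restrict (Ioi 0 ×ˢ Ioi 0))
  symm : ∀ {y z : ℝ}, 0 < y → 0 < z → K y z = K z y
  two_le : ∀ {y z : ℝ}, 0 < y → 0 < z → 2 ≤ K y z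
  le : ∀ {y z : ℝ}, 0 < y → 0 < z → K y z ≤ 2 + ε * ((y / z) ^ α + (z / y) ^ α)

lemma GoodW.isPerturbedConstantKernel {α ε : ℝ} {W : ℝ → ℝ → ℝ} (hW : GoodW α W) (hε : 0 ≤ ε) :
    IsPerturbedConstantKernel α ε (Kern ε W) where
  aemeasurable := (((hW.1.const_smul ε).const_add 2).aestronglyMeasurable
    (measurableSet_Ioi.prod measurableSet_Ioi)).aemeasurable
  symm hy hz := by rw [Kern, Kern, hW.2.1 _ _ hy hz]
  two_le hy hz := le_add_of_nonneg_right (mul_nonneg hε (hW.2.2.2 _ _ hy hz).1)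
  le hy hz := add_le_add_right (mul_le_mul_of_nonneg_left (hW.2.2.2 _ _ hy hz).2 hε) 2

/-- The rate at which coagulation with sizes `p.2` consumes the mass carried by sizes `p.1`. -/
noncomputable def massRate (K : ℝ → ℝ → ℝ) (p : ℝ × ℝ) : ℝ≥0∞ := ENNReal.ofReal (p.1 * K p.1 p.2)

/-- The flux of mass across the size `x`, the right-hand side of the profile equation for a size
distribution `ν`. -/
noncomputable def massFlux (K : ℝ → ℝ → ℝ) (ν : Measure ℝ) (x : ℝ) : ℝ≥0∞ :=
  ∫⁻ p in crossing x, massRate K p ∂ν.prod ν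

namespace IsPerturbedConstantKernel

variable {α ε : ℝ} {K : ℝ → ℝ → ℝ} (hK : IsPerturbedConstantKernel α ε K)
include hK

lemma nonneg : 0 ≤ ε := by
  have h := (hK.two_le one_pos one_pos).trans (hK.le one_pos one_pos)
  rw [div_one, one_rpow] at h
  linarith

lemma le_mul (hα0 : 0 ≤ α) (hα1 : α ≤ 1) {c y z : ℝ} (hc : 0 < c) (hy : c ≤ y) (hz : c ≤ z) :
    K y z ≤ (2 + 4 * ε) / c ^ 2 * (y * z) := by
  have hy0 := hc.trans_le hy
  have hz0 := hc.trans_le hz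
  have hε := hK.nonneg
  have hone : 1 ≤ y * z / c ^ 2 := by
    rw [one_le_div (by positivity), sq]; gcongr
  have hyz : y / z ≤ y * z / c ^ 2 := by
    rw [div_le_div_iff₀ hz0 (by positivity), mul_assoc, ← sq]; gcongr
  have hzy : z / y ≤ y * z / c ^ 2 := by
    rw [div_le_div_iff₀ hy0 (by positivity), mul_comm y z, mul_assoc, ← sq]; gcongr
  calc K y z ≤ 2 + ε * ((y / z) ^ α + (z / y) ^ α) := hK.le hy0 hz0
    _ ≤ 2 + ε * ((1 + y / z) + (1 + z / y)) := by
        gcongr <;> exact rpow_le_one_add (by positivity) hα0 hα1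
    _ ≤ 2 * (y * z / c ^ 2) + ε * ((y * z / c ^ 2 + y * z / c ^ 2)
        + (y * z / c ^ 2 + y * z / c ^ 2)) := by gcongr; linarith
    _ = (2 + 4 * ε) / c ^ 2 * (y * z) := by ring

lemma aemeasurable_prod {ν : Measure ℝ} (hν : ν ≪ volume.restrict (Ioi 0)) :
    AEMeasurable (Function.uncurry K) (ν.prod ν) := by
  refine AEMeasurable.mono_ac ?_ (hν.prod hν)
  rw [Measure.prod_restrict]
  exact hK.aemeasurable

lemma aemeasurable_massRate {ν : Measure ℝ} (hν : ν ≪ volume.restrict (Ioi 0)) :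
    AEMeasurable (massRate K) (ν.prod ν) :=
  (measurable_fst.aemeasurable.mul (hK.aemeasurable_prod hν)).ennreal_ofReal

end IsPerturbedConstantKernel

lemma ae_prod_pos {ν : Measure ℝ} (hν : ν ≪ volume.restrict (Ioi 0)) :
    ∀ᵐ p ∂ν.prod ν, 0 < p.1 ∧ 0 < p.2 := by
  have hpos : ∀ᵐ x ∂ν, 0 < x := hν.ae_le (ae_restrict_mem measurableSet_Ioi)
  exact (Measure.quasiMeasurePreserving_fst.ae hpos).and
    (Measure.quasiMeasurePreserving_snd.ae hpos)

end Kernel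

section Finiteness

variable {α ε : ℝ} {K : ℝ → ℝ → ℝ} {ν : Measure ℝ}

lemma massFlux_eq_zero_of_measure_Iio {η x : ℝ} (hη : ν (Iio η) = 0) (hx : x ≤ η) [SFinite ν] :
    massFlux K ν x = 0 := by
  refine setLIntegral_measure_zero _ _ (measure_mono_null (t := Iio η ×ˢ univ)
    (fun p hp => ⟨hp.1.trans_le hx, trivial⟩) ?_)
  rw [Measure.prod_prod, hη, zero_mul]

variable (hα0 : 0 ≤ α) (hα1 : α ≤ 1) (hK : IsPerturbedConstantKernel α ε K)
include hα0 hα1 hK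

/- The three terms cover the cases `y < x₀`, `z < x₀ ≤ y` and `x₀ ≤ y, z`. -/
lemma massRate_mul_le {x₀ b y z : ℝ} {v : ℝ≥0∞} (hx₀ : 0 < x₀) (hy : 0 < y) (hz : 0 < z)
    (hyb : y < b) (hyz : 2 * x₀ < y + z) (hvb : v ≤ ENNReal.ofReal b) (hvz : v ≤ ENNReal.ofReal z) :
    massRate K (y, z) * v ≤
      ENNReal.ofReal b * ((crossing x₀).indicator (massRate K) (y, z)
        + (crossing x₀).indicator (massRate K) (z, y)
        + ENNReal.ofReal (b * ((2 + 4 * ε) / x₀ ^ 2)) *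
          (ENNReal.ofReal y * ENNReal.ofReal z)) := by
  have hε := hK.nonneg
  have hb : 0 < b := hy.trans hyb
  rcases lt_or_ge y x₀ with hyx | hyx
  · have hcross : (y, z) ∈ crossing x₀ := ⟨hyx, by linarith⟩
    rw [indicator_of_mem hcross, mul_comm, add_assoc]
    exact mul_le_mul' hvb le_self_add
  rcases lt_or_ge z x₀ with hzx | hzx
  · have hcross : (z, y) ∈ crossing x₀ := ⟨hzx, by linarith⟩
    have hKzy : 0 ≤ K z y := zero_le_two.trans (hK.two_le hz hy)
    calc massRate K (y, z) * v ≤ ENNReal.ofReal (y * K y z) * ENNReal.ofReal z :=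
          mul_le_mul_right hvz _
      _ ≤ ENNReal.ofReal b * massRate K (z, y) := by
        rw [massRate, ← ENNReal.ofReal_mul' hz.le, ← ENNReal.ofReal_mul hb.le, hK.symm hy hz,
          mul_assoc, mul_comm (K z y)]
        gcongr
      _ ≤ _ := by
        rw [indicator_of_mem hcross]
        exact mul_le_mul_right (le_add_right le_add_self) _
  · rw [mul_comm]
    refine mul_le_mul' hvb (le_add_left ?_)
    rw [massRate, ← ENNReal.ofReal_mul hy.le, ← ENNReal.ofReal_mul (by positivity), mul_assoc b]
    exact ENNReal.ofReal_le_ofReal (mul_le_mul hyb.le (hK.le_mul hα0 hα1 hx₀ hyx hzx)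
      (zero_le_two.trans (hK.two_le hy hz)) hb.le)

lemma massRate_mul_volume_le {x₀ b : ℝ} (hx₀ : 0 < x₀) {p : ℝ × ℝ} (hp : 0 < p.1 ∧ 0 < p.2) :
    massRate K p * volume.restrict (Ioo (2 * x₀) b) (Ioo p.1 (p.1 + p.2)) ≤
      ENNReal.ofReal b * ((crossing x₀).indicator (massRate K) p
        + (crossing x₀).indicator (massRate K) p.swap
        + ENNReal.ofReal (b * ((2 + 4 * ε) / x₀ ^ 2)) *
          (ENNReal.ofReal p.1 * ENNReal.ofReal p.2)) := by
  obtain ⟨y, z⟩ := p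
  rw [Measure.restrict_apply measurableSet_Ioo]
  rcases (Ioo y (y + z) ∩ Ioo (2 * x₀) b).eq_empty_or_nonempty with h | ⟨x, ⟨hyx, hxyz⟩, hx0, hxb⟩
  · rw [h, measure_empty, mul_zero]
    exact zero_le
  refine massRate_mul_le hα0 hα1 hK hx₀ hp.1 hp.2 (hyx.trans hxb) (hx0.trans hxyz) ?_ ?_
  · refine (measure_mono inter_subset_right).trans ?_
    rw [Real.volume_Ioo]
    exact ENNReal.ofReal_le_ofReal (by linarith)
  · refine (measure_mono inter_subset_left).trans ?_
    rw [Real.volume_Ioo, add_sub_cancel_left]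

variable [SFinite ν] (hν : ν ≪ volume.restrict (Ioi 0)) (hint : Integrable (fun x => x) ν)
include hν hint

lemma lintegral_massFlux_ne_top {x₀ b : ℝ} (hx₀ : 0 < x₀)
    (hfin : massFlux K ν x₀ ≠ ∞) : ∫⁻ x in Ioo (2 * x₀) b, massFlux K ν x ≠ ∞ := by
  have hrate := hK.aemeasurable_massRate hν
  have hcross : AEMeasurable ((crossing x₀).indicator (massRate K)) (ν.prod ν) :=
    hrate.indicator (measurableSet_crossing x₀)
  have hmass : ∫⁻ x, ENNReal.ofReal x ∂ν ≠ ∞ := hint.lintegral_lt_top.ne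
  have hflux : ∫⁻ p, (crossing x₀).indicator (massRate K) p ∂ν.prod ν = massFlux K ν x₀ :=
    lintegral_indicator (measurableSet_crossing x₀) _
  refine ne_top_of_le_ne_top ?_ ((lintegral_lintegral_crossing hrate _).trans_le
    (lintegral_mono_ae ((ae_prod_pos hν).mono fun p hp =>
      massRate_mul_volume_le hα0 hα1 hK hx₀ hp)))
  rw [lintegral_const_mul' _ _ ENNReal.ofReal_ne_top,
    lintegral_add_right' _ (by fun_prop), lintegral_add_left' hcross,
    lintegral_prod_swap, lintegral_const_mul' _ _ ENNReal.ofReal_ne_top,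
    lintegral_prod_mul (by fun_prop) (by fun_prop), hflux]
  finiteness

lemma ae_massFlux_lt_top (hfreq : ∃ᶠ x in 𝓝[>] 0, massFlux K ν x < ∞) :
    ∀ᵐ x ∂volume.restrict (Ioi (0 : ℝ)), massFlux K ν x < ∞ := by
  have hsmall : ∀ n : ℕ, ∃ x₀ ∈ Ioo (0 : ℝ) (1 / (n + 1)), massFlux K ν x₀ < ∞ := fun n =>
    have ⟨x₀, hfin, hx₀⟩ := (hfreq.and_eventually
      (Ioo_mem_nhdsGT (Nat.one_div_pos_of_nat (n := n)))).exists
    ⟨x₀, hx₀, hfin⟩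
  choose s hs hfin using hsmall
  have hae : ∀ᵐ x : ℝ, ∀ n : ℕ, x ∈ Ioo (2 * s n) (n + 1) → massFlux K ν x < ∞ := by
    refine ae_all_iff.2 fun n => (ae_restrict_iff' measurableSet_Ioo).1 ?_
    exact ae_lt_top' (aemeasurable_lintegral_crossing (hK.aemeasurable_massRate hν) _)
      (lintegral_massFlux_ne_top hα0 hα1 hK hν hint (hs n).1 (hfin n).ne)
  refine (ae_restrict_iff' measurableSet_Ioi).2 (hae.mono fun x hx (hx0 : 0 < x) => ?_)
  obtain ⟨n, hn⟩ := exists_nat_gt (max x (2 / x))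
  have hlarge : 2 < n * x := (div_lt_iff₀ hx0).1 ((le_max_right _ _).trans_lt hn)
  have hsn : s n * (n + 1) < 1 := (lt_div_iff₀ (by positivity)).1 (hs n).2
  refine hx n ⟨?_, by linarith [le_max_left x (2 / x)]⟩
  nlinarith [(hs n).1]

end Finiteness

section ProfileEquation

variable {α ε : ℝ} {K : ℝ → ℝ → ℝ} {φ : ℝ → ℝ} {ν : Measure ℝ}

lemma lintegral_indicator_massRate_lt_top (hα0 : 0 ≤ α) (hα1 : α ≤ 1)
    (hK : IsPerturbedConstantKernel α ε K) (hint : Integrable (fun x => x) ν) {x y : ℝ}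
    (hy : 0 < y) : ∫⁻ z, (crossing x).indicator (massRate K) (y, z) ∂ν < ∞ := by
  rcases le_or_gt x y with hxy | hyx
  · have hnotMem : ∀ z, (y, z) ∉ crossing x := fun z h => hxy.not_gt h.1
    simp only [indicator_of_notMem (hnotMem _), lintegral_zero, ENNReal.zero_lt_top]
  have hc : 0 < min y (x - y) := lt_min hy (sub_pos.2 hyx)
  set C := (2 + 4 * ε) / min y (x - y) ^ 2
  refine (lintegral_mono (g := fun z => ENNReal.ofReal (y * (C * (y * z)))) fun z => ?_).trans_lt
    (((hint.const_mul y).const_mul C).const_mul y).lintegral_lt_top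
  refine indicator_apply_le' (fun h => ENNReal.ofReal_le_ofReal ?_) fun _ => zero_le
  have hz : min y (x - y) ≤ z := (min_le_right _ _).trans (by linarith [h.2])
  exact mul_le_mul_of_nonneg_left (hK.le_mul hα0 hα1 hc (min_le_left _ _) hz) hy.le

namespace IsProfile

variable (hφ : IsProfile K φ)
include hφ

lemma aemeasurable : AEMeasurable φ (volume.restrict (Ioi 0)) :=
  hφ.1.aestronglyMeasurable.aemeasurable

lemma integrable_id : Integrable (fun x => x) (densityMeasure φ) :=
  (integrable_densityMeasure_iff hφ.aemeasurable hφ.2.1).2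
    (by simpa only [mul_comm] using hφ.2.2.1)

variable (hα0 : 0 ≤ α) (hα1 : α ≤ 1) (hK : IsPerturbedConstantKernel α ε K)
include hα0 hα1 hK

omit hα0 hα1 in
lemma setIntegral_Ioi_eq_mul_integral {x y : ℝ} (hy : y ∈ Ioo 0 x) :
    ∫ z in Ioi (x - y), y * K y z * φ y * φ z =
      φ y * ∫ z, ((crossing x).indicator (massRate K) (y, z)).toReal ∂densityMeasure φ := by
  have hsub : Ioi (x - y) ⊆ Ioi 0 := Ioi_subset_Ioi (sub_pos.2 hy.2).le
  have hrate : ∀ z, ((crossing x).indicator (massRate K) (y, z)).toReal =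
      (Ioi (x - y)).indicator (fun z => y * K y z) z := fun z => by
    by_cases hz : z ∈ Ioi (x - y)
    · have hcross : (y, z) ∈ crossing x := ⟨hy.2, sub_lt_iff_lt_add'.1 hz⟩
      have hKpos : 0 ≤ K y z := zero_le_two.trans (hK.two_le hy.1 (hsub hz))
      rw [indicator_of_mem hcross, indicator_of_mem hz, massRate,
        ENNReal.toReal_ofReal (mul_nonneg hy.1.le hKpos)]
    · have hcross : (y, z) ∉ crossing x := fun h => hz (sub_lt_iff_lt_add'.2 h.2)
      rw [indicator_of_notMem hcross, indicator_of_notMem hz, ENNReal.toReal_zero]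
  simp only [hrate]
  rw [integral_indicator measurableSet_Ioi,
    setIntegral_densityMeasure hφ.aemeasurable hφ.2.1 measurableSet_Ioi hsub, ← integral_const_mul]
  exact integral_congr_ae (ae_of_all _ fun z => by ring)

lemma integral_integral_eq_toReal_massFlux (x : ℝ) :
    ∫ y in Ioo 0 x, ∫ z in Ioi (x - y), y * K y z * φ y * φ z =
      (massFlux K (densityMeasure φ) x).toReal := by
  have hac : densityMeasure φ ≪ volume.restrict (Ioi 0) := densityMeasure_absolutelyContinuous
  have houter : ∀ᵐ y ∂densityMeasure φ, y ∉ Ioo 0 x →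
      ∫ z, ((crossing x).indicator (massRate K) (y, z)).toReal ∂densityMeasure φ = 0 := by
    filter_upwards [ae_densityMeasure_pos] with y hy hyx
    have hcross : ∀ z, (y, z) ∉ crossing x := fun z h => hyx ⟨hy, h.1⟩
    simp only [indicator_of_notMem (hcross _), ENNReal.toReal_zero, integral_zero]
  rw [setIntegral_congr_fun measurableSet_Ioo fun y hy => hφ.setIntegral_Ioi_eq_mul_integral hK hy,
    ← setIntegral_densityMeasure hφ.aemeasurable hφ.2.1 measurableSet_Ioo Ioo_subset_Ioi_self,
    setIntegral_eq_integral_of_ae_compl_eq_zero houter,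
    integral_integral_toReal ((hK.aemeasurable_massRate hac).indicator (measurableSet_crossing x))
      (ae_densityMeasure_pos.mono fun y hy =>
        lintegral_indicator_massRate_lt_top hα0 hα1 hK hφ.integrable_id hy),
    lintegral_indicator (measurableSet_crossing x), massFlux]

/- Where the flux is infinite the profile equation reads `x ^ 2 * φ x = 0`, since the Bochner
integral is then `0`. If this happened on some `(0, η)`, then `φ` would vanish there, and so would
the flux. -/
lemma frequently_massFlux_lt_top : ∃ᶠ x in 𝓝[>] 0, massFlux K (densityMeasure φ) x < ∞ := by
  intro hevent
  obtain ⟨η, hη, htop⟩ := mem_nhdsGT_iff_exists_Ioo_subset.1 hevent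
  have hzero : ∀ᵐ x ∂volume.restrict (Ioi 0), x < η → φ x = 0 := by
    filter_upwards [hφ.2.2.2, ae_restrict_mem measurableSet_Ioi] with x heq hx hxη
    rw [hφ.integral_integral_eq_toReal_massFlux hα0 hα1 hK, not_lt_top_iff.1 (htop ⟨hx, hxη⟩),
      ENNReal.toReal_top] at heq
    exact (mul_eq_zero.1 heq).resolve_left (pow_ne_zero 2 (ne_of_gt hx))
  have hnull : densityMeasure φ (Iio η) = 0 := by
    rw [densityMeasure, withDensity_apply_eq_zero' hφ.aemeasurable.ennreal_ofReal]
    refine measure_eq_zero_iff_ae_notMem.2 (hzero.mono fun x hx hmem => hmem.1 ?_)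
    rw [hx hmem.2, ENNReal.ofReal_zero]
  exact htop ⟨half_pos hη, half_lt_self hη⟩ <|
    (massFlux_eq_zero_of_measure_Iio hnull (half_le_self hη.le)).trans_lt ENNReal.zero_lt_top

lemma ae_ofReal_eq_massFlux : ∀ᵐ x ∂volume.restrict (Ioi 0),
    ENNReal.ofReal (x ^ 2 * φ x) = massFlux K (densityMeasure φ) x := by
  filter_upwards [hφ.2.2.2, ae_massFlux_lt_top hα0 hα1 hK densityMeasure_absolutelyContinuous
    hφ.integrable_id (hφ.frequently_massFlux_lt_top hα0 hα1 hK)] with x heq hfin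
  rw [heq, hφ.integral_integral_eq_toReal_massFlux hα0 hα1 hK, ENNReal.ofReal_toReal hfin.ne]

end IsProfile

lemma densityMeasure_exp_Ioo {q y z : ℝ} (hq : 0 ≤ q) (hy : 0 ≤ y) (hz : 0 ≤ z) :
    densityMeasure (fun x => q * exp (-(q * x))) (Ioo y (y + z)) =
      ENNReal.ofReal (exp (-(q * y)) * (1 - exp (-(q * z)))) := by
  have hderiv : ∀ x ∈ uIcc y (y + z),
      HasDerivAt (fun x => -exp (-(q * x))) (q * exp (-(q * x))) x := fun x _ =>
    (hasDerivAt_const_mul q).neg.exp.neg.congr_deriv (by rw [Pi.neg_apply]; ring)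
  have hcont : Continuous fun x => q * exp (-(q * x)) := by fun_prop
  have hsub : Ioo y (y + z) ⊆ Ioi 0 := Ioo_subset_Ioi_self.trans (Ioi_subset_Ioi hy)
  have hintegral : ∫ x in Ioo y (y + z), q * exp (-(q * x)) =
      exp (-(q * y)) * (1 - exp (-(q * z))) := by
    rw [← integral_Ioc_eq_integral_Ioo, ← intervalIntegral.integral_of_le (by linarith),
      intervalIntegral.integral_eq_sub_of_hasDerivAt hderiv (hcont.intervalIntegrable _ _),
      mul_add, neg_add, exp_add]
    ring
  rw [densityMeasure, withDensity_apply _ measurableSet_Ioo,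
    Measure.restrict_restrict measurableSet_Ioo, inter_eq_self_of_subset_left hsub,
    ← ofReal_integral_eq_lintegral_ofReal
      (hcont.integrableOn_Icc.mono_set Ioo_subset_Icc_self)
      (ae_of_all _ fun x => mul_nonneg hq (exp_pos _).le), hintegral]

namespace IsProfile

variable (hφ : IsProfile K φ) (hα0 : 0 ≤ α) (hα1 : α ≤ 1) (hK : IsPerturbedConstantKernel α ε K)
  {q : ℝ} (hq : 0 < q)
include hφ hα0 hα1 hK hq

lemma lintegral_massRate_mul_exp :
    ∫⁻ p, massRate K p * ENNReal.ofReal (exp (-(q * p.1)) * (1 - exp (-(q * p.2))))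
        ∂(densityMeasure φ).prod (densityMeasure φ) =
      ENNReal.ofReal (q * laplaceMoment (densityMeasure φ) 2 q) := by
  have hac : densityMeasure φ ≪ volume.restrict (Ioi 0) := densityMeasure_absolutelyContinuous
  have hrate := hK.aemeasurable_massRate hac
  have hexp := (integrable_pow_succ_mul_exp_neg ae_densityMeasure_nonneg hφ.integrable_id hq
    1).const_mul q
  set τ := densityMeasure fun x => q * exp (-(q * x))
  calc _ = ∫⁻ p, massRate K p * τ (Ioo p.1 (p.1 + p.2))
        ∂(densityMeasure φ).prod (densityMeasure φ) :=
        lintegral_congr_ae ((ae_prod_pos hac).mono fun p hp => by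
          simp only [τ, densityMeasure_exp_Ioo hq.le hp.1.le hp.2.le])
    _ = ∫⁻ x, massFlux K (densityMeasure φ) x ∂τ := (lintegral_lintegral_crossing hrate τ).symm
    _ = ∫⁻ x in Ioi 0, ENNReal.ofReal (q * exp (-(q * x))) * massFlux K (densityMeasure φ) x :=
        lintegral_densityMeasure (by fun_prop) (aemeasurable_lintegral_crossing hrate _)
    _ = ∫⁻ x in Ioi 0, ENNReal.ofReal (φ x) * ENNReal.ofReal (q * (x ^ 2 * exp (-(q * x)))) := by
        refine lintegral_congr_ae ?_
        filter_upwards [hφ.ae_ofReal_eq_massFlux hα0 hα1 hK, hφ.2.1] with x hflux hx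
        rw [← hflux, ← ENNReal.ofReal_mul (mul_pos hq (exp_pos _)).le, ← ENNReal.ofReal_mul hx]
        ring_nf
    _ = ∫⁻ x, ENNReal.ofReal (q * (x ^ 2 * exp (-(q * x)))) ∂densityMeasure φ :=
        (lintegral_densityMeasure hφ.aemeasurable (by fun_prop)).symm
    _ = ENNReal.ofReal (∫ x, q * (x ^ 2 * exp (-(q * x))) ∂densityMeasure φ) :=
        (ofReal_integral_eq_lintegral_ofReal hexp (ae_of_all _ fun x =>
          mul_nonneg hq.le (mul_nonneg (sq_nonneg x) (exp_pos _).le))).symm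
    _ = _ := by rw [integral_const_mul, laplaceMoment]

end IsProfile

end ProfileEquation

section DifferentialInequalities

variable {α ε : ℝ} {K : ℝ → ℝ → ℝ} {φ : ℝ → ℝ}

lemma integral_prod_mul_exp_mul_one_sub_exp (ν : Measure ℝ) [SFinite ν] (q : ℝ) :
    ∫ p : ℝ × ℝ, p.1 * exp (-(q * p.1)) * (1 - exp (-(q * p.2))) ∂ν.prod ν =
      laplaceMoment ν 1 q * bernsteinTransform ν q := by
  simp only [laplaceMoment, pow_one]
  exact integral_prod_mul (fun y => y * exp (-(q * y))) fun z => 1 - exp (-(q * z))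

namespace IsProfile

section

variable (hφ : IsProfile K φ) (hα0 : 0 ≤ α) (hα1 : α ≤ 1) (hK : IsPerturbedConstantKernel α ε K)
  {q : ℝ} (hq : 0 < q)
include hφ hα0 hα1 hK hq

lemma hasIntegral_mul_kernel_mul_exp :
    Integrable (fun p : ℝ × ℝ => p.1 * K p.1 p.2 * (exp (-(q * p.1)) * (1 - exp (-(q * p.2)))))
        ((densityMeasure φ).prod (densityMeasure φ)) ∧
      ∫ p : ℝ × ℝ, p.1 * K p.1 p.2 * (exp (-(q * p.1)) * (1 - exp (-(q * p.2))))
          ∂(densityMeasure φ).prod (densityMeasure φ) =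
        q * laplaceMoment (densityMeasure φ) 2 q := by
  have hac : densityMeasure φ ≪ volume.restrict (Ioi 0) := densityMeasure_absolutelyContinuous
  have hpos : ∀ᵐ p ∂(densityMeasure φ).prod (densityMeasure φ), 0 ≤ p.1 * K p.1 p.2 ∧
      0 ≤ exp (-(q * p.1)) * (1 - exp (-(q * p.2))) := (ae_prod_pos hac).mono fun p hp =>
    ⟨mul_nonneg hp.1.le (zero_le_two.trans (hK.two_le hp.1 hp.2)),
      mul_nonneg (exp_pos _).le (one_sub_exp_neg_nonneg (mul_nonneg hq.le hp.2.le))⟩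
  have hnonneg := hpos.mono fun p hp => mul_nonneg hp.1 hp.2
  have hmeas : AEStronglyMeasurable
      (fun p : ℝ × ℝ => p.1 * K p.1 p.2 * (exp (-(q * p.1)) * (1 - exp (-(q * p.2)))))
      ((densityMeasure φ).prod (densityMeasure φ)) :=
    ((measurable_fst.aemeasurable.mul (hK.aemeasurable_prod hac)).mul
      (by fun_prop)).aestronglyMeasurable
  have hlint := (lintegral_congr_ae (hpos.mono fun p hp => ENNReal.ofReal_mul hp.1)).trans
    (hφ.lintegral_massRate_mul_exp hα0 hα1 hK hq)
  refine ⟨⟨hmeas, ?_⟩, ?_⟩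
  · rw [hasFiniteIntegral_iff_ofReal hnonneg, hlint]
    exact ENNReal.ofReal_lt_top
  · rw [integral_eq_lintegral_of_nonneg_ae hnonneg hmeas, hlint, ENNReal.toReal_ofReal
      (mul_nonneg hq.le (laplaceMoment_nonneg ae_densityMeasure_nonneg 2))]

lemma two_mul_bernsteinTransform_mul_laplaceMoment_le :
    2 * bernsteinTransform (densityMeasure φ) q * laplaceMoment (densityMeasure φ) 1 q ≤
      q * laplaceMoment (densityMeasure φ) 2 q := by
  obtain ⟨hintegrable, hintegral⟩ := hφ.hasIntegral_mul_kernel_mul_exp hα0 hα1 hK hq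
  have hexp := integrable_mul_exp_neg ae_densityMeasure_nonneg hφ.integrable_id hq.le
  have hone := integrable_one_sub_exp_neg ae_densityMeasure_nonneg hφ.integrable_id hq.le
  calc _ = ∫ p : ℝ × ℝ, 2 * (p.1 * exp (-(q * p.1)) * (1 - exp (-(q * p.2))))
        ∂(densityMeasure φ).prod (densityMeasure φ) := by
        rw [integral_const_mul, integral_prod_mul_exp_mul_one_sub_exp]
        ring
    _ ≤ _ := integral_mono_ae ((hexp.mul_prod hone).const_mul 2) hintegrable
        ((ae_prod_pos densityMeasure_absolutelyContinuous).mono fun p hp => by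
          have hweight : 0 ≤ exp (-(q * p.1)) * (1 - exp (-(q * p.2))) :=
            mul_nonneg (exp_pos _).le (one_sub_exp_neg_nonneg (mul_nonneg hq.le hp.2.le))
          have h := mul_le_mul_of_nonneg_right
            (mul_le_mul_of_nonneg_left (hK.two_le hp.1 hp.2) hp.1.le) hweight
          simp only
          linarith)
    _ = _ := hintegral

lemma mul_laplaceMoment_two_le [IsFiniteMeasure (densityMeasure φ)] :
    q * laplaceMoment (densityMeasure φ) 2 q ≤
      2 * bernsteinTransform (densityMeasure φ) q * laplaceMoment (densityMeasure φ) 1 q +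
        2 * ε * q ^ (1 - α) * ((∫ x, x ∂densityMeasure φ) * ∫ x, (1 + x) ∂densityMeasure φ) := by
  obtain ⟨hintegrable, hintegral⟩ := hφ.hasIntegral_mul_kernel_mul_exp hα0 hα1 hK hq
  have hid := hφ.integrable_id
  have hexp := integrable_mul_exp_neg ae_densityMeasure_nonneg hid hq.le
  have hone := integrable_one_sub_exp_neg ae_densityMeasure_nonneg hid hq.le
  have hadd : Integrable (fun x => 1 + x) (densityMeasure φ) := (integrable_const 1).add hid
  have hmain := (hexp.mul_prod hone).const_mul 2
  have hfst := hid.mul_prod hadd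
  have hsnd := hadd.mul_prod hid
  have herror : Integrable (fun p : ℝ × ℝ => ε * q ^ (1 - α) * (p.1 * (1 + p.2) + (1 + p.1) * p.2))
      ((densityMeasure φ).prod (densityMeasure φ)) := (hfst.add hsnd).const_mul _
  rw [← hintegral]
  refine (integral_mono_ae hintegrable (hmain.add herror)
    ((ae_prod_pos densityMeasure_absolutelyContinuous).mono fun p hp => ?_)).trans_eq ?_
  · have hweight : 0 ≤ exp (-(q * p.1)) * (1 - exp (-(q * p.2))) :=
      mul_nonneg (exp_pos _).le (one_sub_exp_neg_nonneg (mul_nonneg hq.le hp.2.le))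
    have hle := mul_div_rpow_mul_exp_le hα0 hα1 hp.1 hp.2 hq
    have hle' := mul_div_rpow_mul_exp_le' hα0 hα1 hp.1 hp.2 hq
    have hkernel := mul_le_mul_of_nonneg_right
      (mul_le_mul_of_nonneg_left (hK.le hp.1 hp.2) hp.1.le) hweight
    have hsum := mul_le_mul_of_nonneg_left (add_le_add hle hle') hK.nonneg
    simp only [Pi.add_apply]
    linarith
  · simp only [Pi.add_apply]
    rw [integral_add hmain herror, integral_const_mul, integral_const_mul, integral_add hfst hsnd,
      integral_prod_mul_exp_mul_one_sub_exp, integral_prod_mul (fun x => x) fun x => 1 + x,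
      integral_prod_mul (fun x => 1 + x) fun x => x]
    ring

end

variable (hφ : IsProfile K φ) (hN : IsNormalised φ) (hα0 : 0 ≤ α)
  (hK : IsPerturbedConstantKernel α ε K)
include hφ hN

lemma integral_id : ∫ x, x ∂densityMeasure φ = 1 := by
  rw [integral_densityMeasure hφ.aemeasurable hφ.2.1]
  simpa only [IsNormalised, mul_comm] using hN

lemma abs_laplaceMoment_one_le {q : ℝ} (hq : 0 ≤ q) :
    |laplaceMoment (densityMeasure φ) 1 q| ≤ 1 := by
  rw [abs_of_nonneg (laplaceMoment_nonneg ae_densityMeasure_nonneg 1), ← hφ.integral_id hN]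
  exact laplaceMoment_one_le ae_densityMeasure_nonneg hφ.integrable_id hq

lemma tendsto_bernsteinTransform_div :
    Tendsto (fun q => bernsteinTransform (densityMeasure φ) q / q) (𝓝[>] 0) (𝓝 1) := by
  rw [← hφ.integral_id hN]
  exact _root_.tendsto_bernsteinTransform_div ae_densityMeasure_nonneg hφ.integrable_id

omit hN in
lemma hasDerivAt_bernsteinTransform {q : ℝ} (hq : 0 < q) :
    HasDerivAt (bernsteinTransform (densityMeasure φ)) (laplaceMoment (densityMeasure φ) 1 q) q :=
  _root_.hasDerivAt_bernsteinTransform ae_densityMeasure_nonneg hφ.integrable_id hq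

omit hN in
lemma hasDerivAt_laplaceMoment_one {q : ℝ} (hq : 0 < q) :
    HasDerivAt (laplaceMoment (densityMeasure φ) 1) (-laplaceMoment (densityMeasure φ) 2 q) q :=
  hasDerivAt_laplaceMoment_succ ae_densityMeasure_nonneg hφ.integrable_id hq 0

include hα0 hK

section

variable (hα1 : α ≤ 1)
include hα1

lemma riccatiDefect_nonpos {q : ℝ} (hq : 0 < q) :
    riccatiDefect (bernsteinTransform (densityMeasure φ)) (laplaceMoment (densityMeasure φ) 1) q
      ≤ 0 :=
  _root_.riccatiDefect_nonpos (fun _ => hφ.hasDerivAt_bernsteinTransform)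
    (fun _ => hφ.hasDerivAt_laplaceMoment_one) (fun _ hq => hφ.abs_laplaceMoment_one_le hN hq.le)
    (hφ.tendsto_bernsteinTransform_div hN)
    (fun _ => hφ.two_mul_bernsteinTransform_mul_laplaceMoment_le hα0 hα1 hK) hq

lemma bernsteinTransform_le_div_one_add {q : ℝ} (hq : 0 < q) :
    bernsteinTransform (densityMeasure φ) q ≤ q / (1 + q) :=
  le_div_one_add_of_riccatiDefect_nonpos (fun _ => hφ.hasDerivAt_bernsteinTransform)
    (hφ.tendsto_bernsteinTransform_div hN)
    (fun _ => bernsteinTransform_pos ae_densityMeasure_nonneg hφ.integrable_id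
      ((hφ.integral_id hN).symm ▸ one_pos))
    (fun _ => hφ.riccatiDefect_nonpos hN hα0 hK hα1) hq

lemma densityMeasure_univ_le_one : densityMeasure φ univ ≤ 1 := by
  rw [← ENNReal.ofReal_one]
  refine measure_univ_le_of_bernsteinTransform_le hφ.integrable_id ae_densityMeasure_pos
    fun q hq => (hφ.bernsteinTransform_le_div_one_add hN hα0 hK hα1 hq).trans ?_
  rw [div_le_one (by positivity)]
  linarith

lemma measureReal_densityMeasure_univ_le_one : (densityMeasure φ).real univ ≤ 1 :=
  ENNReal.toReal_le_of_le_ofReal zero_le_one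
    ((hφ.densityMeasure_univ_le_one hN hα0 hK hα1).trans_eq ENNReal.ofReal_one.symm)

lemma isFiniteMeasure_densityMeasure : IsFiniteMeasure (densityMeasure φ) :=
  ⟨(hφ.densityMeasure_univ_le_one hN hα0 hK hα1).trans_lt ENNReal.one_lt_top⟩

lemma mul_laplaceMoment_two_le_add {q : ℝ} (hq : 0 < q) :
    q * laplaceMoment (densityMeasure φ) 2 q ≤
      2 * bernsteinTransform (densityMeasure φ) q * laplaceMoment (densityMeasure φ) 1 q +
        4 * ε * q ^ (1 - α) := by
  have := hφ.isFiniteMeasure_densityMeasure hN hα0 hK hα1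
  have hmass := hφ.measureReal_densityMeasure_univ_le_one hN hα0 hK hα1
  have hadd : ∫ x, (1 + x) ∂densityMeasure φ ≤ 2 := by
    rw [integral_add (integrable_const 1) hφ.integrable_id, hφ.integral_id hN, integral_const,
      smul_eq_mul, mul_one]
    linarith
  have hε : 0 ≤ 2 * ε * q ^ (1 - α) := mul_nonneg (mul_nonneg zero_le_two hK.nonneg) (by positivity)
  have hle := hφ.mul_laplaceMoment_two_le hα0 hα1 hK hq
  rw [hφ.integral_id hN, one_mul] at hle
  linarith [mul_le_mul_of_nonneg_left hadd hε]

end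

variable (hα1 : α < 1)
include hα1

lemma neg_le_riccatiDefect {q : ℝ} (hq : 0 < q) :
    -(4 * ε / (1 - α + 1) * q ^ (1 - α + 1)) ≤ riccatiDefect
      (bernsteinTransform (densityMeasure φ)) (laplaceMoment (densityMeasure φ) 1) q :=
  _root_.neg_le_riccatiDefect (fun _ => hφ.hasDerivAt_bernsteinTransform)
    (fun _ => hφ.hasDerivAt_laplaceMoment_one) (fun _ hq => hφ.abs_laplaceMoment_one_le hN hq.le)
    (hφ.tendsto_bernsteinTransform_div hN) (sub_pos.2 hα1)
    (fun _ => hφ.mul_laplaceMoment_two_le_add hN hα0 hK hα1.le) hq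

lemma div_one_add_sub_bernsteinTransform_le {q : ℝ} (hq : 0 < q) :
    q / (1 + q) - bernsteinTransform (densityMeasure φ) q ≤
      4 * ε / ((1 - α) * (1 - α + 1)) * q ^ (1 - α + 1) :=
  div_one_add_sub_le_of_le_riccatiDefect (fun _ => hφ.hasDerivAt_bernsteinTransform)
    (hφ.tendsto_bernsteinTransform_div hN) (sub_pos.2 hα1)
    (fun _ hq => bernsteinTransform_nonneg ae_densityMeasure_nonneg hq.le)
    (fun _ => hφ.bernsteinTransform_le_div_one_add hN hα0 hK hα1.le)
    (fun _ => hφ.neg_le_riccatiDefect hN hα0 hK hα1) hq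

end IsProfile

end DifferentialInequalities

section Limits

lemma ae_mul_nonneg {f : ℝ → ℝ} (hf0 : ∀ᵐ x ∂volume.restrict (Ioi (0 : ℝ)), 0 ≤ f x) :
    ∀ᵐ x ∂volume.restrict (Ioi (0 : ℝ)), 0 ≤ x * f x := by
  filter_upwards [hf0, ae_restrict_mem measurableSet_Ioi] with x hx hx0
  exact mul_nonneg (le_of_lt hx0) hx

lemma integrableOn_mul_exp_neg_Ioi : IntegrableOn (fun x : ℝ => x * exp (-x)) (Ioi 0) := by
  refine (GammaIntegral_convergent two_pos).congr (ae_of_all _ fun x => ?_)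
  norm_num [mul_comm]

lemma laplaceMoment_densityMeasure_mul {f : ℝ → ℝ} (hf : AEMeasurable f (volume.restrict (Ioi 0)))
    (hf0 : ∀ᵐ x ∂volume.restrict (Ioi (0 : ℝ)), 0 ≤ f x) (n : ℕ) (q : ℝ) :
    laplaceMoment (densityMeasure fun x => x * f x) n q =
      laplaceMoment (densityMeasure f) (n + 1) q := by
  rw [laplaceMoment, laplaceMoment, integral_densityMeasure (by fun_prop) (ae_mul_nonneg hf0),
    integral_densityMeasure hf hf0]
  exact integral_congr_ae (ae_of_all _ fun x => by ring)

lemma laplaceMoment_densityMeasure_exp_neg (n : ℕ) {q : ℝ} (hq : 0 ≤ q) :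
    laplaceMoment (densityMeasure fun x => exp (-x)) n q = n.factorial / (1 + q) ^ (n + 1) := by
  have hgamma := integral_rpow_mul_exp_neg_mul_Ioi (a := n + 1) (r := 1 + q) (by positivity)
    (by positivity)
  rw [Gamma_nat_eq_factorial, ← Nat.cast_succ, rpow_natCast, Nat.cast_succ, one_div_pow,
    one_div_mul_eq_div] at hgamma
  rw [laplaceMoment, integral_densityMeasure (by fun_prop) (ae_of_all _ fun x => (exp_pos _).le),
    ← hgamma]
  refine integral_congr_ae (ae_of_all _ fun x => ?_)
  simp only [add_sub_cancel_right, rpow_natCast, mul_left_comm (exp (-x)), ← exp_add]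
  ring_nf

variable {ι : Type*} {l : Filter ι}

lemma tendsto_integral_sub_mul_of_forall_tendsto_laplaceMoment {f : ι → ℝ → ℝ} {g ψ : ℝ → ℝ}
    {M : ℝ} (hf : ∀ i, IntegrableOn (f i) (Ioi 0))
    (hf0 : ∀ i, ∀ᵐ x ∂volume.restrict (Ioi (0 : ℝ)), 0 ≤ f i x) (hg : IntegrableOn g (Ioi 0))
    (hg0 : ∀ᵐ x ∂volume.restrict (Ioi (0 : ℝ)), 0 ≤ g x)
    (hlap : ∀ n : ℕ, Tendsto (fun i => laplaceMoment (densityMeasure (f i)) 0 n) l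
      (𝓝 (laplaceMoment (densityMeasure g) 0 n)))
    (hψ : ContinuousOn ψ (Ici 0)) (hM : ∀ x ∈ Ici 0, |ψ x| ≤ M) :
    Tendsto (fun i => ∫ x in Ioi 0, (f i x - g x) * ψ x) l (𝓝 0) := by
  have := fun i => isFiniteMeasure_densityMeasure (hf i)
  have := isFiniteMeasure_densityMeasure hg
  have hmul : ∀ {h : ℝ → ℝ}, IntegrableOn h (Ioi 0) → IntegrableOn (fun x => h x * ψ x) (Ioi 0) :=
    fun hh => hh.mul_bdd (c := M)
      ((hψ.mono Ioi_subset_Ici_self).aestronglyMeasurable measurableSet_Ioi)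
      ((ae_restrict_mem measurableSet_Ioi).mono fun x hx => hM x (mem_Ioi.1 hx).le)
  have hweak := tendsto_integral_of_forall_tendsto_laplaceMoment (l := l)
    (fun _ => ae_densityMeasure_nonneg) ae_densityMeasure_nonneg hlap hψ hM
  rw [← tendsto_sub_nhds_zero_iff] at hweak
  refine hweak.congr fun i => ?_
  rw [integral_densityMeasure (hf i).aemeasurable (hf0 i), integral_densityMeasure hg.aemeasurable
    hg0, ← integral_sub (hmul (hf i)) (hmul hg)]
  simp only [sub_mul]

namespace IsProfile

section

variable {α ε : ℝ} {K : ℝ → ℝ → ℝ} {φ : ℝ → ℝ}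

lemma integrableOn (hφ : IsProfile K φ) (hN : IsNormalised φ) (hα0 : 0 ≤ α) (hα1 : α ≤ 1)
    (hK : IsPerturbedConstantKernel α ε K) : IntegrableOn φ (Ioi 0) := by
  have := hφ.isFiniteMeasure_densityMeasure hN hα0 hK hα1
  simpa only [mul_one] using
    (integrable_densityMeasure_iff hφ.aemeasurable hφ.2.1).1 (integrable_const (1 : ℝ))

end

variable {α : ℝ} {ε : ι → ℝ} {K : ι → ℝ → ℝ → ℝ} {φ : ι → ℝ → ℝ}
  (hφ : ∀ i, IsProfile (K i) (φ i)) (hN : ∀ i, IsNormalised (φ i)) (hα0 : 0 ≤ α) (hα1 : α < 1)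
  (hK : ∀ i, IsPerturbedConstantKernel α (ε i) (K i)) (hlim : Tendsto ε l (𝓝 0))
include hφ hN hα0 hα1 hK hlim

lemma tendsto_bernsteinTransform {q : ℝ} (hq : 0 < q) :
    Tendsto (fun i => bernsteinTransform (densityMeasure (φ i)) q) l (𝓝 (q / (1 + q))) := by
  have herror : Tendsto
      (fun i => q / (1 + q) - 4 * ε i / ((1 - α) * (1 - α + 1)) * q ^ (1 - α + 1)) l
      (𝓝 (q / (1 + q))) := by
    simpa only [mul_zero, zero_div, zero_mul, sub_zero] using
      (((hlim.const_mul 4).div_const _).mul_const _).const_sub _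
  refine tendsto_of_tendsto_of_tendsto_of_le_of_le herror tendsto_const_nhds (fun i => ?_)
    fun i => (hφ i).bernsteinTransform_le_div_one_add (hN i) hα0 (hK i) hα1.le hq
  exact sub_le_comm.1 ((hφ i).div_one_add_sub_bernsteinTransform_le (hN i) hα0 (hK i) hα1 hq)

lemma tendsto_riccatiDefect {q : ℝ} (hq : 0 < q) :
    Tendsto (fun i => riccatiDefect (bernsteinTransform (densityMeasure (φ i)))
      (laplaceMoment (densityMeasure (φ i)) 1) q) l (𝓝 0) := by
  have herror : Tendsto (fun i => -(4 * ε i / (1 - α + 1) * q ^ (1 - α + 1))) l (𝓝 0) := by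
    simpa only [mul_zero, zero_div, zero_mul, neg_zero] using
      (((hlim.const_mul 4).div_const _).mul_const _).neg
  exact tendsto_of_tendsto_of_tendsto_of_le_of_le herror tendsto_const_nhds
    (fun i => (hφ i).neg_le_riccatiDefect (hN i) hα0 (hK i) hα1 hq)
    fun i => (hφ i).riccatiDefect_nonpos (hN i) hα0 (hK i) hα1.le hq

lemma tendsto_laplaceMoment_one {q : ℝ} (hq : 0 ≤ q) :
    Tendsto (fun i => laplaceMoment (densityMeasure (φ i)) 1 q) l (𝓝 (1 / (1 + q) ^ 2)) := by
  rcases hq.eq_or_lt with rfl | hq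
  · simp only [laplaceMoment, pow_one, zero_mul, neg_zero, exp_zero, mul_one,
      (hφ _).integral_id (hN _), add_zero, one_pow, div_one]
    exact tendsto_const_nhds
  have hB := tendsto_bernsteinTransform hφ hN hα0 hα1 hK hlim hq
  have h := (((tendsto_riccatiDefect hφ hN hα0 hα1 hK hlim hq).add hB).sub (hB.pow 2)).div_const q
  have hvalue : (0 + q / (1 + q) - (q / (1 + q)) ^ 2) / q = 1 / (1 + q) ^ 2 := by
    field_simp; ring
  rw [hvalue] at h
  refine h.congr fun i => ?_
  rw [riccatiDefect, div_eq_iff hq.ne']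
  ring

lemma tendsto_measureReal_univ : Tendsto (fun i => (densityMeasure (φ i)).real univ) l (𝓝 1) := by
  have hB : ∀ q, 0 < q → ∀ i,
      bernsteinTransform (densityMeasure (φ i)) q ≤ (densityMeasure (φ i)).real univ := by
    intro q hq i
    have := (hφ i).isFiniteMeasure_densityMeasure (hN i) hα0 (hK i) hα1.le
    have hsub := laplaceMoment_zero_eq_sub ae_densityMeasure_nonneg (hφ i).integrable_id hq.le
    have hnonneg := laplaceMoment_nonneg (q := q) (ae_densityMeasure_nonneg (f := φ i)) 0
    linarith
  have hsup : Tendsto (fun q : ℝ => q / (1 + q)) atTop (𝓝 1) := by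
    have h := (tendsto_inv_atTop_zero.comp (tendsto_atTop_add_const_left atTop (1 : ℝ)
      tendsto_id)).const_sub 1
    rw [sub_zero] at h
    refine h.congr' ((eventually_gt_atTop 0).mono fun q hq => ?_)
    simp only [Function.comp_apply, id_eq]
    field_simp
    ring
  refine tendsto_order.2 ⟨fun a ha => ?_, fun a ha => Eventually.of_forall fun i =>
    ((hφ i).measureReal_densityMeasure_univ_le_one (hN i) hα0 (hK i) hα1.le).trans_lt ha⟩
  obtain ⟨q, haq, hq⟩ := ((hsup.eventually_const_lt ha).and (eventually_gt_atTop 0)).exists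
  filter_upwards [(tendsto_bernsteinTransform hφ hN hα0 hα1 hK hlim hq).eventually_const_lt haq]
    with i hi
  exact hi.trans_le (hB q hq i)

lemma tendsto_laplaceMoment_zero {q : ℝ} (hq : 0 ≤ q) :
    Tendsto (fun i => laplaceMoment (densityMeasure (φ i)) 0 q) l (𝓝 (1 / (1 + q))) := by
  have := fun i => (hφ i).isFiniteMeasure_densityMeasure (hN i) hα0 (hK i) hα1.le
  have hmass := tendsto_measureReal_univ hφ hN hα0 hα1 hK hlim
  rcases hq.eq_or_lt with rfl | hq
  · simpa only [laplaceMoment, pow_zero, zero_mul, neg_zero, exp_zero, mul_one, integral_const,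
      smul_eq_mul, add_zero, div_one] using hmass
  have hvalue : 1 - q / (1 + q) = 1 / (1 + q) := by field_simp; ring
  rw [← hvalue]
  refine (hmass.sub (tendsto_bernsteinTransform hφ hN hα0 hα1 hK hlim hq)).congr fun i => ?_
  exact (laplaceMoment_zero_eq_sub ae_densityMeasure_nonneg (hφ i).integrable_id hq.le).symm

end IsProfile

end Limits

theorem stmt3_general {ι : Type*} {l : Filter ι} {α : ℝ} (hα0 : 0 ≤ α) (hα1 : α < 1) {ε : ι → ℝ}
    (hlim : Tendsto ε l (𝓝 0)) {K : ι → ℝ → ℝ → ℝ}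
    (hK : ∀ i, IsPerturbedConstantKernel α (ε i) (K i)) {φ : ι → ℝ → ℝ}
    (hφ : ∀ i, IsProfile (K i) (φ i) ∧ IsNormalised (φ i)) {ψ : ℝ → ℝ}
    (hψc : ContinuousOn ψ (Ici 0)) (hψb : ∃ M : ℝ, ∀ x ∈ Ici (0 : ℝ), |ψ x| ≤ M) :
    Tendsto (fun i => ∫ x in Ioi (0 : ℝ), (φ i x - exp (-x)) * ψ x) l (𝓝 0) ∧
    Tendsto (fun i => ∫ x in Ioi (0 : ℝ), x * (φ i x - exp (-x)) * ψ x) l (𝓝 0) := by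
  obtain ⟨M, hM⟩ := hψb
  have hφ₁ := fun i => (hφ i).1
  have hφ₂ := fun i => (hφ i).2
  have hexp0 : ∀ᵐ x ∂volume.restrict (Ioi (0 : ℝ)), 0 ≤ exp (-x) := ae_of_all _ fun x => by
    positivity
  constructor
  · refine tendsto_integral_sub_mul_of_forall_tendsto_laplaceMoment
      (fun i => (hφ₁ i).integrableOn (hφ₂ i) hα0 hα1.le (hK i)) (fun i => (hφ₁ i).2.1)
      (integrableOn_exp_neg_Ioi 0) hexp0 (fun n => ?_) hψc hM
    simpa only [laplaceMoment_densityMeasure_exp_neg 0 n.cast_nonneg, Nat.factorial_zero,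
      Nat.cast_one, zero_add, pow_one] using
      IsProfile.tendsto_laplaceMoment_zero hφ₁ hφ₂ hα0 hα1 hK hlim n.cast_nonneg
  · simp only [mul_sub]
    refine tendsto_integral_sub_mul_of_forall_tendsto_laplaceMoment (fun i => (hφ₁ i).2.2.1)
      (fun i => ae_mul_nonneg (hφ₁ i).2.1) integrableOn_mul_exp_neg_Ioi (ae_mul_nonneg hexp0)
      (fun n => ?_) hψc hM
    simpa only [laplaceMoment_densityMeasure_mul (hφ₁ _).aemeasurable (hφ₁ _).2.1,
      laplaceMoment_densityMeasure_mul (f := fun x => exp (-x)) (by fun_prop) hexp0,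
      laplaceMoment_densityMeasure_exp_neg 1 n.cast_nonneg, Nat.factorial_one, Nat.cast_one] using
      IsProfile.tendsto_laplaceMoment_one hφ₁ hφ₂ hα0 hα1 hK hlim n.cast_nonneg

theorem stmt3 (α : ℝ) (hα : α ∈ Ioo (0:ℝ) 1) (W : ℝ → ℝ → ℝ) (hW : GoodW α W)
    (ε : ℕ → ℝ) (hε : ∀ k, 0 < ε k) (hlim : Tendsto ε atTop (nhds 0))
    (φ : ℕ → ℝ → ℝ) (hφ : ∀ k, IsProfile (Kern (ε k) W) (φ k) ∧ IsNormalised (φ k))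
    (ψ : ℝ → ℝ) (hψc : ContinuousOn ψ (Ici 0)) (hψb : ∃ M : ℝ, ∀ x ∈ Ici (0:ℝ), |ψ x| ≤ M) :
    Tendsto (fun k => ∫ x in Ioi (0:ℝ), (φ k x - exp (-x)) * ψ x) atTop (nhds 0) ∧
    Tendsto (fun k => ∫ x in Ioi (0:ℝ), x * (φ k x - exp (-x)) * ψ x) atTop (nhds 0) :=
  stmt3_general hα.1.le hα.2 hlim (fun k => hW.isPerturbedConstantKernel (hε k).le) hφ hψc hψb
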